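/- There exists a nonempty Π⁰₁ closed subset Q ⊆ ℝ² which is homeomorphic to the Cantor fan and contains no computable point. -/

import Mathlib

open Set Metric

section TopDefs

variable {α : Type*} [TopologicalSpace α]

/-- `A ⊆ α` is an arc with endpoints `x` and `y`:
a homeomorphic (continuous injective) image of `[0,1]` sending `0 ↦ x`, `1 ↦ y`. -/
def IsArc (A : Set α) (x y : α) : Prop :=
  ∃ f : Set.Icc (0:ℝ) 1 → α, Continuous f ∧ Function.Injective f ∧
    Set.range f = A ∧ f ⟨0, by norm_num⟩ = x ∧ f ⟨1, by norm_num⟩ = y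

/-- A continuum: a nonempty compact connected set. -/
def IsContinuum (X : Set α) : Prop := IsCompact X ∧ IsConnected X

/-- Any two distinct points of `X` are endpoints of an arc contained in `X`. -/
def ArcwiseConnectedSet (X : Set α) : Prop :=
  ∀ x ∈ X, ∀ y ∈ X, x ≠ y → ∃ A, A ⊆ X ∧ IsArc A x y

/-- `X` is unicoherent: for all closed connected `A, B ⊆ X` with `A ∪ B = X`,
the intersection `A ∩ B` is connected. -/
def UnicoherentSet (X : Set α) : Prop :=
  ∀ A B : Set α, A ⊆ X → B ⊆ X → IsClosed A → IsClosed B →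
    IsConnected A → IsConnected B → A ∪ B = X → IsConnected (A ∩ B)

/-- Every subcontinuum of `X` is unicoherent. -/
def HereditarilyUnicoherent (X : Set α) : Prop :=
  ∀ Y, Y ⊆ X → IsContinuum Y → UnicoherentSet Y

/-- A dendroid: an arcwise connected, hereditarily unicoherent continuum. -/
def IsDendroid (X : Set α) : Prop :=
  IsContinuum X ∧ ArcwiseConnectedSet X ∧ HereditarilyUnicoherent X

/-- The unit circle `S¹`. -/
def unitCircle : Set (EuclideanSpace ℝ (Fin 2)) := Metric.sphere 0 1

/-- A dendrite: a locally connected continuum containing no subset homeomorphic to `S¹`. -/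
def IsDendrite (X : Set α) : Prop :=
  IsContinuum X ∧ LocallyConnectedSpace ↥X ∧
    ∀ S : Set α, S ⊆ X → IsEmpty (↥S ≃ₜ ↥unitCircle)

/-- `x` and `y` lie in the same arc-component of `Y`. -/
def SameArcComponent (Y : Set α) (x y : α) : Prop :=
  x = y ∨ ∃ A, A ⊆ Y ∧ IsArc A x y

/-- `x` is a ramification point of `X`: `X \ {x}` has at least three arc-components. -/
def IsRamificationPoint (X : Set α) (x : α) : Prop :=
  x ∈ X ∧ ∃ u v w, u ∈ X \ {x} ∧ v ∈ X \ {x} ∧ w ∈ X \ {x} ∧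
    ¬ SameArcComponent (X \ {x}) u v ∧ ¬ SameArcComponent (X \ {x}) u w ∧
    ¬ SameArcComponent (X \ {x}) v w

/-- A tree (as a continuum): a dendrite with finitely many ramification points. -/
def IsTreeContinuum (X : Set α) : Prop :=
  IsDendrite X ∧ {x | IsRamificationPoint X x}.Finite

end TopDefs

section CompDefs

/-- The rational open ball in `ℝ²` coded by `((q₁, q₂), r)`. -/
def ballOfCode (c : (ℚ × ℚ) × ℚ) : Set (ℝ × ℝ) :=
  {x | dist x (((c.1.1 : ℝ), (c.1.2 : ℝ)) : ℝ × ℝ) < (c.2 : ℝ)}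

/-- A closed set `F ⊆ ℝ²` is `Π⁰₁` if it is the complement of the union of the rational
open balls coded by some c.e. set of codes. -/
def IsPi01Closed (F : Set (ℝ × ℝ)) : Prop :=
  ∃ W : (ℚ × ℚ) × ℚ → Prop, REPred W ∧ F = Set.univ \ ⋃ c ∈ {c | W c}, ballOfCode c

/-- `F ⊆ ℝ²` is c.e. closed if the set of codes of rational open balls meeting `F` is c.e. -/
def IsCEClosed (F : Set (ℝ × ℝ)) : Prop :=
  REPred (fun c : (ℚ × ℚ) × ℚ => (F ∩ ballOfCode c).Nonempty)

/-- A computable closed subset of `ℝ²`: both `Π⁰₁` and c.e. closed. -/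
def IsComputableClosed (F : Set (ℝ × ℝ)) : Prop :=
  IsPi01Closed F ∧ IsCEClosed F

/-- A point of `ℝ²` is computable if the set of codes of rational open balls
containing it is c.e. -/
def IsComputablePoint (x : ℝ × ℝ) : Prop :=
  REPred (fun c : (ℚ × ℚ) × ℚ => x ∈ ballOfCode c)

end CompDefs

section PsiDefs

/-- A tree of binary strings: a set of finite binary strings closed under prefixes. -/
def IsTreeOfStrings (T : Set (List Bool)) : Prop :=
  ∀ σ ∈ T, ∀ τ : List Bool, τ <+: σ → τ ∈ T

/-- The point `ψ(σ) ∈ ℝ²` associated with the binary string `σ`. -/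
noncomputable def psiPt (σ : List Bool) : ℝ × ℝ :=
  ((3:ℝ) ^ (-(σ.length : ℤ)) / 2 +
      2 * ∑ i ∈ Finset.range σ.length,
        (if σ.getD i false then (3:ℝ) ^ (-((i : ℤ) + 1)) else 0),
    (2:ℝ) ^ (-(σ.length : ℤ)))

/-- The planar embedding `Ψ(T)` of a tree `T` of binary strings: the closure of the union
of the segments from `ψ(σ⁻)` to `ψ(σ)` over nonempty `σ ∈ T` (together with the points
`ψ(σ)`, `σ ∈ T`, which makes no difference except for the degenerate trees `∅`, `{⟨⟩}`). -/
noncomputable def PsiSet (T : Set (List Bool)) : Set (ℝ × ℝ) :=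
  closure (psiPt '' T ∪ ⋃ σ ∈ T, ⋃ (_ : σ ≠ []), segment ℝ (psiPt σ.dropLast) (psiPt σ))

end PsiDefs

/-- The middle-thirds Cantor set. -/
def middleThirdsCantorSet : Set ℝ :=
  {x | ∃ a : ℕ → Bool, x = ∑' i : ℕ, 2 * (if a i then (1:ℝ) else 0) * 3 ^ (-((i : ℤ) + 1))}

/-- The Cantor fan: the union of the segments joining the points `(c, 1)`, `c` in the Cantor
set, to the apex `(1/2, 0)`. -/
def cantorFanSet : Set (ℝ × ℝ) :=
  {p | ∃ c ∈ middleThirdsCantorSet, ∃ t ∈ Set.Icc (0:ℝ) 1,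
    p = (1 - t) • ((c, 1) : ℝ × ℝ) + t • ((1/2, 0) : ℝ × ℝ)}

section PartA

open Set Metric

namespace CF
open Encodable

section natcomp
variable {α : Type*} [Primcodable α]

theorem c_bin {β γ δ : Type*} [Primcodable β] [Primcodable γ] [Primcodable δ] {h : β → γ → δ}
    (hh : Computable₂ h) {f : α → β} {g : α → γ}
    (hf : Computable f) (hg : Computable g) : Computable fun a => h (f a) (g a) := hh.comp hf hg

theorem n_add {f g : α → ℕ} (hf : Computable f) (hg : Computable g) :
    Computable fun a => f a + g a := Primrec.nat_add.to_comp.comp hf hg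
theorem n_sub {f g : α → ℕ} (hf : Computable f) (hg : Computable g) :
    Computable fun a => f a - g a := Primrec.nat_sub.to_comp.comp hf hg
theorem n_mul {f g : α → ℕ} (hf : Computable f) (hg : Computable g) :
    Computable fun a => f a * g a := Primrec.nat_mul.to_comp.comp hf hg
theorem n_div {f g : α → ℕ} (hf : Computable f) (hg : Computable g) :
    Computable fun a => f a / g a := Primrec.nat_div.to_comp.comp hf hg
theorem n_mod {f g : α → ℕ} (hf : Computable f) (hg : Computable g) :
    Computable fun a => f a % g a := Primrec.nat_mod.to_comp.comp hf hg
theorem n_min {f g : α → ℕ} (hf : Computable f) (hg : Computable g) :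
    Computable fun a => min (f a) (g a) := Primrec.nat_min.to_comp.comp hf hg
theorem n_pair {f g : α → ℕ} (hf : Computable f) (hg : Computable g) :
    Computable fun a => Nat.pair (f a) (g a) := Primrec₂.natPair.to_comp.comp hf hg

theorem p_comp {β : Type*} [Primcodable β] {p : β → Prop} (hp : ComputablePred p) {f : α → β}
    (hf : Computable f) : ComputablePred fun a => p (f a) := by
  obtain ⟨_, h⟩ := hp
  exact ⟨fun _ => inferInstance, h.comp hf⟩
theorem p_not {p : α → Prop} (hp : ComputablePred p) : ComputablePred fun a => ¬ p a := hp.not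
theorem p_and {p q : α → Prop} (hp : ComputablePred p) (hq : ComputablePred q) :
    ComputablePred fun a => p a ∧ q a := by
  obtain ⟨_, hp⟩ := hp
  obtain ⟨_, hq⟩ := hq
  refine ⟨fun _ => inferInstance, ?_⟩
  exact (Primrec.and.to_comp.comp hp hq).of_eq fun a => by simp
theorem p_or {p q : α → Prop} (hp : ComputablePred p) (hq : ComputablePred q) :
    ComputablePred fun a => p a ∨ q a := by
  obtain ⟨_, hp⟩ := hp
  obtain ⟨_, hq⟩ := hq
  refine ⟨fun _ => inferInstance, ?_⟩
  exact (Primrec.or.to_comp.comp hp hq).of_eq fun a => by simp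
theorem p_ite {σ : Type*} [Primcodable σ] {c : α → Prop} [DecidablePred c] (hc : ComputablePred c)
    {f g : α → σ} (hf : Computable f) (hg : Computable g) :
    Computable fun a => if c a then f a else g a :=
  (hc.decide.cond hf hg).of_eq fun a => by simp [Bool.cond_decide]
theorem p_le {f g : α → ℕ} (hf : Computable f) (hg : Computable g) :
    ComputablePred fun a => f a ≤ g a :=
  p_comp (PrimrecPred.computablePred Primrec.nat_le) (hf.pair hg)
theorem p_lt {f g : α → ℕ} (hf : Computable f) (hg : Computable g) :
    ComputablePred fun a => f a < g a :=
  p_comp (PrimrecPred.computablePred Primrec.nat_lt) (hf.pair hg)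
theorem p_eq {σ : Type*} [Primcodable σ] {f g : α → σ} (hf : Computable f)
    (hg : Computable g) : ComputablePred fun a => f a = g a := by
  classical
  exact p_comp (PrimrecPred.computablePred (Primrec.eq (α := σ))) (hf.pair hg)
end natcomp

theorem coprime_comp : ComputablePred fun p : ℕ × ℕ => 0 < p.2 ∧ Nat.Coprime p.1 p.2 := by
  have h1 : PrimrecRel fun (x : ℕ) (y : ℕ) =>
      ¬ (y.unpair.1 % (x+2) = 0 ∧ y.unpair.2 % (x+2) = 0) := by
    apply PrimrecPred.not
    apply PrimrecPred.and
    · exact (Primrec.eq (α := ℕ)).comp (Primrec.nat_mod.comp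
        (Primrec.fst.comp (Primrec.unpair.comp Primrec.snd))
        (Primrec.nat_add.comp Primrec.fst (Primrec.const 2))) (Primrec.const 0)
    · exact (Primrec.eq (α := ℕ)).comp (Primrec.nat_mod.comp
        (Primrec.snd.comp (Primrec.unpair.comp Primrec.snd))
        (Primrec.nat_add.comp Primrec.fst (Primrec.const 2))) (Primrec.const 0)
  have h2 := PrimrecRel.forall_lt h1
  have h3 : ComputablePred fun p : ℕ × ℕ => ∀ x < p.2, ¬ (p.1 % (x+2) = 0 ∧ p.2 % (x+2) = 0) :=
    (p_comp (PrimrecPred.computablePred h2)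
      (f := fun p : ℕ × ℕ => (p.2, Nat.pair p.1 p.2))
      (Computable.snd.pair (n_pair Computable.fst Computable.snd))).of_eq fun p => by simp
  refine (p_and (p_lt (Computable.const 0) Computable.snd) h3).of_eq fun p => ?_
  refine and_congr_right fun hp => ?_
  constructor
  · intro h
    by_contra hc
    obtain ⟨d, hd, h1, h2⟩ := Nat.Prime.not_coprime_iff_dvd.1 hc
    have := hd.two_le
    have hle := Nat.le_of_dvd hp h2
    refine h (d-2) (by omega) ?_
    rw [show d - 2 + 2 = d by omega]
    exact ⟨Nat.mod_eq_zero_of_dvd h1, Nat.mod_eq_zero_of_dvd h2⟩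
  · intro h x hx hxx
    have := Nat.dvd_gcd (Nat.dvd_of_mod_eq_zero hxx.1) (Nat.dvd_of_mod_eq_zero hxx.2)
    rw [h] at this
    have := Nat.le_of_dvd one_pos this
    omega

theorem subtype_ofNat_comp (s : Set ℕ) [DecidablePred (· ∈ s)] [Infinite s]
    (hs : ComputablePred (· ∈ s)) : Computable fun n => (Nat.Subtype.ofNat s n : ℕ) := by
  have hex : ∀ x : ℕ, ∃ m, x + m + 1 ∈ s := by
    intro x
    obtain ⟨y, hy, hxy⟩ := (Set.infinite_coe_iff.1 ‹Infinite s›).exists_gt x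
    exact ⟨y - x - 1, by rwa [show x + (y-x-1) + 1 = y by omega]⟩
  have hf := Computable.find (P := fun x m => x + m + 1 ∈ s)
    (p_comp hs (n_add (n_add Computable.fst Computable.snd) (Computable.const 1))) hex
  have hr : Computable fun n : ℕ => (Nat.rec (⊥ : s).val
    (fun _ y => y + Nat.find (hex y) + 1) n : ℕ) := by
    refine Computable.nat_rec (f := fun n => n) (g := fun _ => (⊥ : s).val)
      (h := fun _ p => p.2 + Nat.find (hex p.2) + 1) Computable.id (Computable.const _) ?_
    have h2 : Computable fun p : ℕ × ℕ × ℕ => p.2.2 := Computable.snd.comp Computable.snd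
    exact n_add (n_add h2 (hf.comp h2)) (Computable.const 1)
  refine hr.of_eq fun n => ?_
  induction n with
  | zero => rfl
  | succ n ih =>
    simp only [Nat.Subtype.ofNat]
    rw [ih]
    rfl

/-- base code of a rational number -/
def e0 (q : ℚ) : ℕ := Nat.pair (encode q.num) q.den

theorem int_natAbs (z : ℤ) : (encode z + 1) / 2 = z.natAbs := by
  cases z with
  | ofNat n => 
    change (2 * n + 1) / 2 = n
    omega
  | negSucc n =>
    change (2 * n + 1 + 1) / 2 = n + 1
    omega

theorem int_pos (z : ℤ) : (if encode z % 2 = 0 then encode z / 2 else 0) = z.toNat := by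
  cases z with
  | ofNat n =>
    change (if (2 * n) % 2 = 0 then (2 * n) / 2 else 0) = n
    simp
  | negSucc n =>
    change (if (2 * n+1) % 2 = 0 then (2 * n+1) / 2 else 0) = 0
    rw [if_neg (by omega)]

theorem e0_range (m : ℕ) : m ∈ Set.range e0 ↔
    0 < m.unpair.2 ∧ Nat.Coprime ((m.unpair.1 + 1) / 2) m.unpair.2 := by
  constructor
  · rintro ⟨q, rfl⟩
    simp only [e0, Nat.unpair_pair, int_natAbs]
    exact ⟨q.pos, q.reduced⟩
  · rintro ⟨h1, h2⟩
    have hz : encode (Denumerable.ofNat ℤ m.unpair.1) = m.unpair.1 := Denumerable.encode_ofNat _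
    refine ⟨⟨Denumerable.ofNat ℤ m.unpair.1, m.unpair.2, h1.ne', ?_⟩, ?_⟩
    · rw [← int_natAbs, hz]; exact h2
    · simp only [e0, hz, Nat.pair_unpair]

theorem e0_comp : Computable e0 := by
  let := decidableRangeEncode ℚ
  let : Infinite (Set.range (encode : ℚ → ℕ)) :=
    Infinite.of_injective _ (Equiv.ofInjective _ encode_injective).injective
  have hs : ComputablePred (· ∈ Set.range (encode : ℚ → ℕ)) := by
    have : ComputablePred fun m : ℕ =>
        0 < m.unpair.2 ∧ Nat.Coprime ((m.unpair.1 + 1) / 2) m.unpair.2 :=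
      p_comp coprime_comp (f := fun m : ℕ => ((m.unpair.1 + 1) / 2, m.unpair.2)) (Computable.pair
        (n_div (n_add (Computable.fst.comp Primrec.unpair.to_comp) (Computable.const 1))
          (Computable.const 2)) (Computable.snd.comp Primrec.unpair.to_comp))
    exact this.of_eq fun m => (e0_range m).symm
  have h := subtype_ofNat_comp _ hs
  have h2 : ∀ q : ℚ, (Nat.Subtype.ofNat (Set.range (encode : ℚ → ℕ))
      (@encode ℚ (Rat.instDenumerable.toEncodable) q) : ℕ) = e0 q := by
    intro q
    have h3 := @Denumerable.ofNat_encode ℚ Rat.instDenumerable q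
    have h4 : ∀ n, @Denumerable.ofNat ℚ Rat.instDenumerable n =
      (equivRangeEncode ℚ).symm (Nat.Subtype.ofNat (Set.range (encode : ℚ → ℕ)) n) := fun n => rfl
    rw [h4, Equiv.symm_apply_eq] at h3
    rw [h3]
    rfl
  exact (h.comp (Computable.encode (α := ℚ))).of_eq h2

theorem den_comp : Computable (fun q : ℚ => q.den) := by
  refine (Computable.snd.comp (Primrec.unpair.to_comp.comp e0_comp)).of_eq fun q => ?_
  simp [e0]

theorem pos_comp : Computable (fun q : ℚ => q.num.toNat) := by
  have h1 : Computable (fun q : ℚ => encode q.num) :=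
    (Computable.fst.comp (Primrec.unpair.to_comp.comp e0_comp)).of_eq fun q => by simp [e0]
  refine (p_ite (p_eq (n_mod h1 (Computable.const 2)) (Computable.const 0))
    (n_div h1 (Computable.const 2)) (Computable.const 0)).of_eq fun q => int_pos _

theorem neg_comp : Computable (fun q : ℚ => (-q.num).toNat) := by
  have h1 : Computable (fun q : ℚ => encode q.num) :=
    (Computable.fst.comp (Primrec.unpair.to_comp.comp e0_comp)).of_eq fun q => by simp [e0]
  have h2 := n_sub (n_div (n_add h1 (Computable.const 1)) (Computable.const 2)) pos_comp
  refine h2.of_eq fun q => ?_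
  rw [int_natAbs]; omega

theorem rat_eq (q : ℚ) : q = ((q.num.toNat : ℚ) - ((-q.num).toNat : ℚ)) / (q.den : ℚ) := by
  conv_lhs => rw [← Rat.num_div_den q]
  congr 1
  have : q.num = (q.num.toNat : ℤ) - ((-q.num).toNat : ℤ) := by omega
  exact_mod_cast this

/-- a rational number from naturals -/
def mkQ (p : (ℕ × ℕ) × ℕ) : ℚ := ((p.1.1 : ℚ) - (p.1.2 : ℚ)) / ((p.2 : ℚ) + 1)

theorem mk_comp : Computable mkQ := by
  change Computable fun p : (ℕ × ℕ) × ℕ => ((p.1.1 : ℚ) - (p.1.2 : ℚ)) / ((p.2 : ℚ) + 1)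
  have key : ∀ (p : (ℕ × ℕ) × ℕ) (q : ℚ),
      q = ((p.1.1 : ℚ) - (p.1.2 : ℚ)) / ((p.2 : ℚ) + 1) ↔
      q.num.toNat * (p.2 + 1) + p.1.2 * q.den = p.1.1 * q.den + (-q.num).toNat * (p.2+1) := by
    intro p q
    have hd : (q.den : ℚ) ≠ 0 := by exact_mod_cast q.den_nz
    have hd2 : (p.2 : ℚ) + 1 ≠ 0 := by positivity
    conv_lhs => rw [rat_eq q]
    rw [div_eq_div_iff hd hd2, ← @Nat.cast_inj ℚ]
    push_cast
    constructor <;> intro h <;> linarith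
  have hP : ComputablePred fun x : ((ℕ × ℕ) × ℕ) × ℕ =>
      (Denumerable.ofNat ℚ x.2).num.toNat * (x.1.2 + 1) + x.1.1.2 * (Denumerable.ofNat ℚ x.2).den
      = x.1.1.1 * (Denumerable.ofNat ℚ x.2).den
        + (-(Denumerable.ofNat ℚ x.2).num).toNat * (x.1.2+1) := by
    have hq : Computable fun x : ((ℕ × ℕ) × ℕ) × ℕ => Denumerable.ofNat ℚ x.2 :=
      (Computable.ofNat ℚ).comp Computable.snd
    have a1 : Computable fun x : ((ℕ × ℕ) × ℕ) × ℕ => x.1.2 := Computable.snd.comp Computable.fst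
    have a2 : Computable fun x : ((ℕ × ℕ) × ℕ) × ℕ => x.1.1.2 :=
      Computable.snd.comp (Computable.fst.comp Computable.fst)
    have a3 : Computable fun x : ((ℕ × ℕ) × ℕ) × ℕ => x.1.1.1 :=
      Computable.fst.comp (Computable.fst.comp Computable.fst)
    have a4 := n_add a1 (Computable.const 1)
    exact p_eq (n_add (n_mul (pos_comp.comp hq) a4) (n_mul a2 (den_comp.comp hq)))
      (n_add (n_mul a3 (den_comp.comp hq)) (n_mul (neg_comp.comp hq) a4))
  have hex : ∀ p : (ℕ × ℕ) × ℕ, ∃ n, 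
      (Denumerable.ofNat ℚ n).num.toNat * (p.2 + 1) + p.1.2 * (Denumerable.ofNat ℚ n).den
      = p.1.1 * (Denumerable.ofNat ℚ n).den
        + (-(Denumerable.ofNat ℚ n).num).toNat * (p.2+1) := by
    intro p
    refine ⟨@encode ℚ Rat.instDenumerable.toEncodable
      (((p.1.1 : ℚ) - (p.1.2 : ℚ)) / ((p.2 : ℚ) + 1)), ?_⟩
    rw [← key, @Denumerable.ofNat_encode ℚ Rat.instDenumerable]
  refine ((Computable.ofNat ℚ).comp (Computable.find hP hex)).of_eq fun p => ?_
  exact (key p _).2 (Nat.find_spec (hex p))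

section ratcomp
variable {α : Type*} [Primcodable α]

theorem q_mk {f g h : α → ℕ} (hf : Computable f) (hg : Computable g) (hh : Computable h) :
    Computable fun a => ((f a : ℚ) - (g a : ℚ)) / ((h a : ℚ) + 1) :=
  (mk_comp.comp ((hf.pair hg).pair hh)).of_eq fun a => rfl

theorem q_cast {f : α → ℕ} (hf : Computable f) : Computable fun a => (f a : ℚ) :=
  (q_mk hf (Computable.const 0) (Computable.const 0)).of_eq fun a => by simp

theorem q_add {f g : α → ℚ} (hf : Computable f) (hg : Computable g) :
    Computable fun a => f a + g a := by
  have p1 := pos_comp.comp hf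
  have n1 := neg_comp.comp hf
  have d1 := den_comp.comp hf
  have p2 := pos_comp.comp hg
  have n2 := neg_comp.comp hg
  have d2 := den_comp.comp hg
  refine (q_mk (n_add (n_mul p1 d2) (n_mul p2 d1)) (n_add (n_mul n1 d2) (n_mul n2 d1))
    (n_sub (n_mul d1 d2) (Computable.const 1))).of_eq fun a => ?_
  have h1 : ((f a).den : ℚ) ≠ 0 := by exact_mod_cast (f a).den_nz
  have h2 : ((g a).den : ℚ) ≠ 0 := by exact_mod_cast (g a).den_nz
  rw [Nat.cast_sub (Nat.mul_pos (f a).pos (g a).pos)]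
  conv_rhs => rw [rat_eq (f a), rat_eq (g a)]
  push_cast
  field_simp
  ring

theorem q_neg {f : α → ℚ} (hf : Computable f) : Computable fun a => - f a := by
  have p1 := pos_comp.comp hf
  have n1 := neg_comp.comp hf
  have d1 := den_comp.comp hf
  refine (q_mk n1 p1 (n_sub d1 (Computable.const 1))).of_eq fun a => ?_
  have h1 : ((f a).den : ℚ) ≠ 0 := by exact_mod_cast (f a).den_nz
  rw [Nat.cast_sub (f a).pos]
  conv_rhs => rw [rat_eq (f a)]
  push_cast
  field_simp
  ring

theorem q_sub {f g : α → ℚ} (hf : Computable f) (hg : Computable g) :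
    Computable fun a => f a - g a :=
  (q_add hf (q_neg hg)).of_eq fun a => by ring

theorem q_mul {f g : α → ℚ} (hf : Computable f) (hg : Computable g) :
    Computable fun a => f a * g a := by
  have p1 := pos_comp.comp hf
  have n1 := neg_comp.comp hf
  have d1 := den_comp.comp hf
  have p2 := pos_comp.comp hg
  have n2 := neg_comp.comp hg
  have d2 := den_comp.comp hg
  refine (q_mk (n_add (n_mul p1 p2) (n_mul n1 n2)) (n_add (n_mul p1 n2) (n_mul n1 p2))
    (n_sub (n_mul d1 d2) (Computable.const 1))).of_eq fun a => ?_
  have h1 : ((f a).den : ℚ) ≠ 0 := by exact_mod_cast (f a).den_nz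
  have h2 : ((g a).den : ℚ) ≠ 0 := by exact_mod_cast (g a).den_nz
  rw [Nat.cast_sub (Nat.mul_pos (f a).pos (g a).pos)]
  conv_rhs => rw [rat_eq (f a), rat_eq (g a)]
  push_cast
  field_simp
  ring

theorem qp_le {f g : α → ℚ} (hf : Computable f) (hg : Computable g) :
    ComputablePred fun a => f a ≤ g a := by
  have h := q_sub hg hf
  refine (p_eq (neg_comp.comp h) (Computable.const 0)).of_eq fun a => ?_
  rw [← sub_nonneg, ← Rat.num_nonneg]
  omega

theorem qp_lt {f g : α → ℚ} (hf : Computable f) (hg : Computable g) :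
    ComputablePred fun a => f a < g a :=
  (qp_le hg hf).not.of_eq fun a => not_le

theorem q_max {f g : α → ℚ} (hf : Computable f) (hg : Computable g) :
    Computable fun a => max (f a) (g a) :=
  (p_ite (qp_le hf hg) hg hf).of_eq fun a => (max_def _ _).symm

theorem q_min {f g : α → ℚ} (hf : Computable f) (hg : Computable g) :
    Computable fun a => min (f a) (g a) :=
  (p_ite (qp_le hf hg) hf hg).of_eq fun a => (min_def _ _).symm

theorem q_inv {f : α → ℕ} (hf : Computable f) : Computable fun a => ((f a : ℚ))⁻¹ := by
  refine (p_ite (p_eq hf (Computable.const 0)) (Computable.const 0)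
    (q_mk (Computable.const 1) (Computable.const 0)
    (n_sub hf (Computable.const 1)))).of_eq fun a => ?_
  by_cases h : f a = 0
  · simp [h]
  · rw [if_neg h, Nat.cast_sub (by omega)]
    simp

end ratcomp
end CF

end PartA

section PartB

open Set Metric

namespace CF
open Encodable Nat.Partrec

theorem re_enum {α : Type*} [Primcodable α] {p : α → Prop} (h : REPred p) :
    ∃ C : α × ℕ → Prop, ComputablePred C ∧ ∀ a, p a ↔ ∃ k, C (a, k) := by
  obtain ⟨c, hc⟩ := Code.exists_code.1 h
  refine ⟨fun x => (Code.evaln x.2 c (encode x.1)).isSome = true, ?_, ?_⟩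
  · refine Computable.computablePred ?_
    have h1 : Computable fun x : α × ℕ => Code.evaln x.2 c (encode x.1) :=
      Code.primrec_evaln.to_comp.comp
        ((Computable.snd.pair (Computable.const c)).pair (Computable.encode.comp Computable.fst))
    exact (Primrec.option_isSome.to_comp.comp h1).of_eq fun a => by simp
  · intro a
    have h2 : p a ↔ (c.eval (encode a)).Dom := by
      rw [hc]
      simp [Part.bind, Part.assert]
    rw [h2]
    constructor
    · intro hd
      obtain ⟨k, hk⟩ := Code.evaln_complete.1 (Part.get_mem hd)
      exact ⟨k, Option.isSome_iff_exists.2 ⟨_, hk⟩⟩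
    · rintro ⟨k, hk⟩
      obtain ⟨x, hx⟩ := Option.isSome_iff_exists.1 hk
      exact Part.dom_iff_mem.2 ⟨x, Code.evaln_sound hx⟩

theorem re_of_enum {α β : Type*} [Primcodable α] [Primcodable β] {C : α × β → Prop}
    (h : ComputablePred C) : REPred fun a => ∃ b, C (a, b) := by
  obtain ⟨c, hc, rfl⟩ := ComputablePred.computable_iff.1 h
  have h1 : Computable₂ fun (a : α) (n : ℕ) =>
      (Option.casesOn (decode (α := β) n) false fun b => c (a, b) : Bool) := by
    refine Computable.option_casesOn (Computable.decode.comp Computable.snd)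
      (Computable.const false) ?_
    exact hc.comp ((Computable.fst.comp Computable.fst).pair Computable.snd)
  have h2 := (Partrec.rfind (p := fun a n => Part.some
    (Option.casesOn (decode (α := β) n) false fun b => c (a, b) : Bool)) h1.partrec₂).dom_re
  refine h2.of_eq fun a => ?_
  refine Nat.rfind_dom'.trans ?_
  constructor
  · rintro ⟨n, hn, -⟩
    cases hd : decode (α := β) n with
    | none => simp [hd] at hn
    | some b => simp [hd] at hn; exact ⟨b, hn⟩
  · rintro ⟨b, hb⟩
    refine ⟨encode b, ?_, fun _ => trivial⟩
    simpa using hb.symm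

theorem re_comp {α β : Type*} [Primcodable α] [Primcodable β] {p : β → Prop} (hp : REPred p)
    {f : α → β} (hf : Computable f) : REPred fun a => p (f a) := Partrec.comp hp hf

theorem re_exists {α β : Type*} [Primcodable α] [Primcodable β] {R : α × β → Prop}
    (h : REPred R) : REPred fun a => ∃ b, R (a, b) := by
  obtain ⟨C, hC, hCR⟩ := re_enum h
  have h1 : REPred fun a : α => ∃ b : β × ℕ, C ((a, b.1), b.2) :=
    re_of_enum (C := fun x : α × β × ℕ => C ((x.1, x.2.1), x.2.2))
      (p_comp hC ((Computable.fst.pair (Computable.fst.comp Computable.snd)).pair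
        (Computable.snd.comp Computable.snd)))
  refine h1.of_eq fun a => ?_
  simp [hCR, Prod.exists]

theorem re_and {α : Type*} [Primcodable α] {p q : α → Prop} (hp : REPred p) (hq : REPred q) :
    REPred fun a => p a ∧ q a := by
  obtain ⟨C, hC, hCR⟩ := re_enum hp
  obtain ⟨C', hC', hCR'⟩ := re_enum hq
  have h1 : REPred fun a : α => ∃ b : ℕ × ℕ, C (a, b.1) ∧ C' (a, b.2) :=
    re_of_enum (C := fun x : α × ℕ × ℕ => C (x.1, x.2.1) ∧ C' (x.1, x.2.2))
      (p_and (p_comp hC (Computable.fst.pair (Computable.fst.comp Computable.snd)))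
        (p_comp hC' (Computable.fst.pair (Computable.snd.comp Computable.snd))))
  refine h1.of_eq fun a => ?_
  simp [hCR, hCR', Prod.exists]

/-- stage-`s` approximation to the diagonal function -/
def ev (s e : ℕ) : Option ℕ := Code.evaln s (Denumerable.ofNat Code e) e

theorem ev_comp : Computable₂ ev := by
  refine Code.primrec_evaln.to_comp.comp
    (g := fun x : ℕ × ℕ => ((x.1, Denumerable.ofNat Code x.2), x.2)) ?_
  exact (Computable.fst.pair ((Computable.ofNat Code).comp Computable.snd)).pair Computable.snd

theorem ev_mono {s s' e x : ℕ} (h : s ≤ s') (hx : ev s e = some x) : ev s' e = some x :=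
  Code.evaln_mono h hx

theorem ev_diag (g : ℕ →. ℕ) (hg : Nat.Partrec g) :
    ∃ e, ∀ x, x ∈ g e ↔ ∃ s, ev s e = some x := by
  obtain ⟨c, rfl⟩ := Code.exists_code.1 hg
  refine ⟨encode c, fun x => ?_⟩
  rw [Code.evaln_complete]
  simp [ev]

theorem ev_zero (e : ℕ) : ev 0 e = Option.none := by
  unfold ev
  cases Denumerable.ofNat Code e <;> simp [Code.evaln]

structure Dat where
  f : ℕ → ℕ
  f_comp : Computable f
  f_inj : Function.Injective f
  f_re : ¬ REPred fun j => ∀ s, f s ≠ j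
  k0 : ℕ → ℕ → Bool
  k1 : ℕ → ℕ → Bool
  k0_comp : Computable₂ k0
  k1_comp : Computable₂ k1
  k0_mono : ∀ s s' e, s ≤ s' → k0 s e = true → k0 s' e = true
  k1_mono : ∀ s s' e, s ≤ s' → k1 s e = true → k1 s' e = true
  k_disj : ∀ s s' e, k0 s e = true → k1 s' e = true → False
  k_diag : ∀ a : ℕ → Bool, Computable a →
    ¬ ∀ e s, (k0 s e = true → a e = true) ∧ (k1 s e = true → a e = false)

theorem not_re_A : ¬ REPred fun e => ∀ s, ev s e ≠ some 0 := by
  intro h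
  have h1 : Partrec fun e : ℕ => (Part.assert (∀ s, ev s e ≠ some 0) fun _ => Part.some ()).map
      fun _ => (0:ℕ) := Partrec.map h (Computable.const 0).to₂
  obtain ⟨e, he⟩ := ev_diag _ (Partrec.nat_iff.1 h1)
  have := he 0
  simp only [Part.mem_map_iff, Part.mem_assert_iff, Part.mem_some_iff, exists_prop, and_true,
    exists_const] at this
  by_cases hx : ∃ s, ev s e = some 0
  · obtain ⟨s, hs⟩ := hx
    exact (this.2 ⟨s, hs⟩) s hs
  · push Not at hx
    obtain ⟨s, hs⟩ := this.1 hx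
    exact hx s hs

def ff (s : ℕ) : ℕ := if ev s.unpair.2 s.unpair.1 = some 0 ∧ ¬ ev (s.unpair.2 - 1) s.unpair.1 = some 0
  then 2 * s.unpair.1 else 2 * s + 1

theorem ff_comp : Computable ff := by
  have u1 : Computable fun s : ℕ => s.unpair.1 := Computable.fst.comp Primrec.unpair.to_comp
  have u2 : Computable fun s : ℕ => s.unpair.2 := Computable.snd.comp Primrec.unpair.to_comp
  refine p_ite (p_and (p_eq (ev_comp.comp u2 u1) (Computable.const _))
    (p_not (p_eq (ev_comp.comp (n_sub u2 (Computable.const 1)) u1) (Computable.const _))))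
    (n_mul (Computable.const 2) u1) (n_add (n_mul (Computable.const 2) Computable.id)
      (Computable.const 1))

theorem ff_inj : Function.Injective ff := by
  have key : ∀ e m m', ev m e = some 0 → ¬ ev (m' - 1) e = some 0 → m' ≤ m := by
    intro e m m' h1 h2
    by_contra hc
    exact h2 (ev_mono (by omega) h1)
  intro s s' h
  unfold ff at h
  split_ifs at h with h1 h2 h2
  · have he : s.unpair.1 = s'.unpair.1 := by omega
    rw [← he] at h2
    have := key _ _ _ h1.1 h2.2
    have := key _ _ _ h2.1 h1.2
    rw [← Nat.pair_unpair s, ← Nat.pair_unpair s', he, show s.unpair.2 = s'.unpair.2 by omega]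
  · omega
  · omega
  · omega

theorem ff_re : ¬ REPred fun j => ∀ s, ff s ≠ j := by
  intro h
  refine not_re_A ((re_comp h (n_mul (Computable.const 2) Computable.id)).of_eq fun e => ?_)
  constructor
  · intro h s hs
    have hex : ∃ s, ev s e = some 0 := ⟨s, hs⟩
    have h1 := Nat.find_spec hex
    have h2 : ¬ ev (Nat.find hex - 1) e = some 0 := by
      apply Nat.find_min hex
      have : Nat.find hex ≠ 0 := by
        intro h0
        rw [h0, ev_zero] at h1
        cases h1
      omega
    refine h (Nat.pair e (Nat.find hex)) ?_
    simp only [ff, Nat.unpair_pair]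
    rw [if_pos ⟨h1, h2⟩]
    rfl
  · intro h s hs
    unfold ff at hs
    split_ifs at hs with h1
    · refine h s.unpair.2 ?_
      have : s.unpair.1 = e := by simp at hs; exact hs
      rw [← this]; exact h1.1
    · simp at hs; omega

theorem exists_dat : Nonempty Dat := by
  refine ⟨⟨ff, ff_comp, ff_inj, ff_re, fun s e => decide (ev s e = some 0),
    fun s e => decide (ev s e = some 1), ?_, ?_, ?_, ?_, ?_, ?_⟩⟩
  · exact (p_eq ev_comp (Computable.const _)).decide
  · exact (p_eq ev_comp (Computable.const _)).decide
  · intro s s' e h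
    simp only [decide_eq_true_eq]
    exact ev_mono h
  · intro s s' e h
    simp only [decide_eq_true_eq]
    exact ev_mono h
  · intro s s' e h h'
    simp only [decide_eq_true_eq] at h h'
    have h1 := ev_mono (le_max_left s s') h
    have h2 := ev_mono (le_max_right s s') h'
    rw [h1] at h2
    simp at h2
  · intro a ha hall
    have hg : Computable fun e => cond (a e) 1 0 := Computable.cond ha (Computable.const 1)
      (Computable.const 0)
    obtain ⟨e, he⟩ := ev_diag _ (Partrec.nat_iff.1 hg.partrec)
    have h := he (cond (a e) 1 0)
    simp only [PFun.coe_val, Part.mem_some_iff, true_iff] at h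
    obtain ⟨s, hs⟩ := h
    have := hall e s
    cases hae : a e <;> simp [hae] at this hs <;> tauto

end CF

end PartB

section PartC

open Set Metric

namespace CF

section gen
variable {K : Type*} [Field K] [LinearOrder K]

/-- fold of the first coordinate -/
def gg (β E x : K) : K := max x (E * (β - x))
/-- first coordinate of the stage map -/
def stX (β E n x t : K) : K := gg β E x + max (t - (n + 2)) 0
/-- arclength parameter of the stage map -/
def stS (β E n x t : K) : K := (stX β E n x t - x) / E +
  max (min (t - (n + 2)) 0) (min (-(min (t - (n + 2)) 0)) ((n + 2) * (16 * E * (β - x) - 1)))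
/-- reparametrization -/
def theta (E n k S : K) : K :=
  max (min (n + 2 + S) (k + 2 * (S + (n + 2 - k)) / (2 * (n - k) + 3)))
    (k + 2 + E * (S - (n - k + 1)))
/-- the stage map -/
def stG (β E n k : K) (z : K × K) : K × K :=
  (stX β E n z.1 z.2, theta E n k (stS β E n z.1 z.2))
/-- inverse reparametrization -/
def sigm (E n k t : K) : K :=
  min (max (t - (n + 2)) (k - (n + 2) + (t - k) * (2 * (n - k) + 3) / 2)) (n - k + 1 + (t - k - 2) / E)
/-- first coordinate of inverse, in terms of arclength -/
def ivX (β E u S : K) : K := max (β - u / E) (min u (u - E * S))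
/-- second coordinate of inverse, in terms of arclength -/
def ivT (β E n u S : K) : K := n + 2 + (u - gg β E (ivX β E u S)) + min S 0
  - max (S - (u - β + u / E) / E) 0
/-- the inverse stage map -/
def stJ (β E n k : K) (z : K × K) : K × K :=
  (ivX β E z.1 (sigm E n k z.2), ivT β E n z.1 (sigm E n k z.2))
end gen

theorem stG_cast (β E n k : ℚ) (z : ℚ × ℚ) :
    (((stG β E n k z).1 : ℝ), ((stG β E n k z).2 : ℝ)) =
      stG (β : ℝ) (E : ℝ) (n : ℝ) (k : ℝ) ((z.1 : ℝ), (z.2 : ℝ)) := by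
  simp only [stG, stX, stS, theta, gg]
  push_cast
  rfl

section lip
/-- closeness -/
def Nr (d a b : ℝ) : Prop := |a - b| ≤ d

variable {d e a b a' b' : ℝ}
theorem Nr.add (h : Nr d a b) (h' : Nr e a' b') : Nr (d + e) (a + a') (b + b') := by
  unfold Nr at *
  rw [abs_le] at *
  constructor <;> linarith [h.1, h.2, h'.1, h'.2]
theorem Nr.sub (h : Nr d a b) (h' : Nr e a' b') : Nr (d + e) (a - a') (b - b') := by
  unfold Nr at *
  rw [abs_le] at *
  constructor <;> linarith [h.1, h.2, h'.1, h'.2]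
theorem Nr.neg (h : Nr d a b) : Nr d (-a) (-b) := by
  unfold Nr at *
  rw [abs_le] at *
  constructor <;> linarith [h.1, h.2]
theorem Nr.refl (hd : 0 ≤ d) (a : ℝ) : Nr d a a := by
  unfold Nr; simpa using hd
theorem Nr.zero (a : ℝ) : Nr 0 a a := Nr.refl le_rfl a
theorem Nr.mul (c : ℝ) (hc : 0 ≤ c) (h : Nr d a b) : Nr (c * d) (c * a) (c * b) := by
  unfold Nr at *
  rw [← mul_sub, abs_mul, abs_of_nonneg hc]
  exact mul_le_mul_of_nonneg_left h hc
theorem Nr.mono (h : Nr d a b) (hde : d ≤ e) : Nr e a b := le_trans h hde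
theorem Nr.max' (h : Nr d a b) (h' : Nr d a' b') : Nr d (Max.max a a') (Max.max b b') := by
  unfold Nr at *
  exact (abs_max_sub_max_le_max a a' b b').trans (max_le h h')
theorem Nr.min' (h : Nr d a b) (h' : Nr d a' b') : Nr d (Min.min a a') (Min.min b b') := by
  unfold Nr at *
  exact (abs_min_sub_min_le_max a a' b b').trans (max_le h h')
theorem Nr.div (c : ℝ) (hc : 0 < c) (h : Nr (d * c) a b) : Nr d (a / c) (b / c) := by
  unfold Nr at *
  rw [← sub_div, abs_div, abs_of_pos hc, div_le_iff₀ hc]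
  exact h
theorem Nr.div1 (c : ℝ) (hc : 1 ≤ c) (h : Nr d a b) : Nr d (a / c) (b / c) := by
  have hd : 0 ≤ d := (abs_nonneg _).trans h
  exact Nr.div c (by linarith) (h.mono (by nlinarith))
theorem Nr.nonneg (h : Nr d a b) : 0 ≤ d := (abs_nonneg _).trans h
end lip

/-- parameter hypotheses -/
structure Par (β E n k : ℝ) : Prop where
  hb : 1 / 8 ≤ β
  hb1 : β ≤ 1
  hE : 16 ≤ E
  hk : 0 ≤ k
  hkn : k ≤ n

namespace Par
variable {β E n k : ℝ}

theorem E_pos (P : Par β E n k) : 0 < E := by linarith [P.hE]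
theorem l_pos (P : Par β E n k) : 0 < 2 * (n - k) + 3 := by linarith [P.hkn]

/-- description of theta -/
theorem theta_cases (P : Par β E n k) (S : ℝ) :
    (S ≤ k - (n + 2) ∧ theta E n k S = n + 2 + S) ∨
    (k - (n + 2) ≤ S ∧ S ≤ n - k + 1 ∧ theta E n k S = k + 2 * (S + (n + 2 - k)) / (2 * (n - k) + 3)) ∨
    (n - k + 1 ≤ S ∧ theta E n k S = k + 2 + E * (S - (n - k + 1))) := by
  have hl := P.l_pos
  have hE := P.hE
  have hkn := P.hkn
  have hd : ∀ y, 2 * y / (2 * (n - k) + 3) = 2 / (2 * (n - k) + 3) * y := fun y => by ring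
  have h2 : 0 < 2 / (2 * (n - k) + 3) := by positivity
  have h3 : 2 / (2 * (n - k) + 3) ≤ 1 := by rw [div_le_one hl]; linarith
  have h4 : 2 / (2 * (n - k) + 3) * (2 * (n - k) + 3) = 2 := by field_simp
  unfold theta
  rw [hd]
  set r := 2 / (2 * (n - k) + 3) with hr
  rcases le_total S (k - (n + 2)) with h | h
  · left
    refine ⟨h, ?_⟩
    rw [min_eq_left, max_eq_left]
    · nlinarith
    · nlinarith
  · rcases le_total S (n - k + 1) with h' | h'
    · right; left
      refine ⟨h, h', ?_⟩
      rw [min_eq_right, max_eq_left]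
      · nlinarith
      · nlinarith
    · right; right
      refine ⟨h', ?_⟩
      rw [min_eq_right, max_eq_right]
      · nlinarith
      · nlinarith

theorem sigm_cases (P : Par β E n k) (t : ℝ) :
    (t ≤ k ∧ sigm E n k t = t - (n + 2)) ∨
    (k ≤ t ∧ t ≤ k + 2 ∧ sigm E n k t = k - (n + 2) + (t - k) * (2 * (n - k) + 3) / 2) ∨
    (k + 2 ≤ t ∧ sigm E n k t = n - k + 1 + (t - k - 2) / E) := by
  have hl := P.l_pos
  have hE := P.hE
  have hkn := P.hkn
  have hd : ∀ y, y / E = 1 / E * y := fun y => by ring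
  have h2 : 0 < 1 / E := by have := P.E_pos; positivity
  have h3 : 1 / E ≤ 1 := by rw [div_le_one P.E_pos]; linarith
  unfold sigm
  rw [hd]
  set r := 1 / E with hr
  rcases le_total t k with h | h
  · left
    refine ⟨h, ?_⟩
    rw [max_eq_left, min_eq_left]
    · nlinarith
    · nlinarith
  · rcases le_total t (k + 2) with h' | h'
    · right; left
      refine ⟨h, h', ?_⟩
      rw [max_eq_right, min_eq_left]
      · nlinarith
      · nlinarith
    · right; right
      refine ⟨h', ?_⟩
      rw [max_eq_right, min_eq_right]
      · nlinarith
      · nlinarith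

theorem theta_sigm (P : Par β E n k) (t : ℝ) : theta E n k (sigm E n k t) = t := by
  have hl := P.l_pos
  have hE := P.E_pos
  have hkn := P.hkn
  rcases P.sigm_cases t with ⟨h, hs⟩ | ⟨h, h', hs⟩ | ⟨h, hs⟩
  · rcases P.theta_cases (sigm E n k t) with ⟨g, e⟩ | ⟨g, g', e⟩ | ⟨g, e⟩
    · rw [e, hs]; ring
    · have : sigm E n k t = k - (n + 2) := by linarith
      rw [e, this]
      have : t = k := by linarith
      rw [this, show k - (n + 2) + (n + 2 - k) = 0 by ring]; simp
    · linarith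
  · have hs' : sigm E n k t + (n + 2 - k) = (t - k) * (2 * (n - k) + 3) / 2 := by linarith
    have h1 : 0 ≤ (t - k) * (2 * (n - k) + 3) := by
      apply mul_nonneg <;> linarith
    have h2 : (t - k) * (2 * (n - k) + 3) ≤ 2 * (2 * (n - k) + 3) :=
      mul_le_mul_of_nonneg_right (by linarith) hl.le
    rcases P.theta_cases (sigm E n k t) with ⟨g, e⟩ | ⟨g, g', e⟩ | ⟨g, e⟩
    · have h3 : (t - k) * (2 * (n - k) + 3) = 0 := by linarith
      have h4 : t - k = 0 := by
        rcases mul_eq_zero.1 h3 with h | h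
        · exact h
        · linarith
      rw [e]; linarith
    · rw [e, hs']; field_simp; ring
    · have h3 : (t - k) * (2 * (n - k) + 3) = 2 * (2 * (n - k) + 3) := by linarith
      have h4 : t - k = 2 := mul_right_cancel₀ hl.ne' h3
      have h5 : sigm E n k t = n - k + 1 := by linarith
      rw [e, h5]; linarith
  · have h1 : 0 ≤ (t - k - 2) / E := div_nonneg (by linarith) hE.le
    rcases P.theta_cases (sigm E n k t) with ⟨g, e⟩ | ⟨g, g', e⟩ | ⟨g, e⟩
    · linarith
    · have h2 : (t - k - 2) / E = 0 := by linarith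
      have h3 : sigm E n k t = n - k + 1 := by linarith
      have h4 : t - k - 2 = 0 := by
        rcases div_eq_zero_iff.1 h2 with h | h
        · exact h
        · linarith
      rw [e, h3, show n - k + 1 + (n + 2 - k) = 2 * (n - k) + 3 by ring]
      rw [mul_div_assoc, div_self hl.ne']; linarith
    · rw [e, hs]; field_simp; ring

theorem theta_strictMono (P : Par β E n k) : StrictMono (theta E n k) := by
  have hl := P.l_pos
  intro a b hab
  have h2 : 0 < 2 / (2 * (n - k) + 3) := by positivity
  unfold theta
  apply max_lt_max
  · apply min_lt_min
    · linarith
    · rw [mul_div_right_comm, mul_div_right_comm]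
      have := mul_lt_mul_of_pos_left hab h2
      linarith
  · have := mul_lt_mul_of_pos_left hab P.E_pos
    linarith

theorem sigm_theta (P : Par β E n k) (S : ℝ) : sigm E n k (theta E n k S) = S :=
  P.theta_strictMono.injective (P.theta_sigm _)

theorem sigm_strictMono (P : Par β E n k) : StrictMono (sigm E n k) := by
  intro a b hab
  by_contra h
  push Not at h
  have := P.theta_strictMono.monotone h
  rw [P.theta_sigm, P.theta_sigm] at this
  linarith

theorem theta_Nr (P : Par β E n k) {d S S' : ℝ} (h : Nr d S S') : Nr (E * d) (theta E n k S) (theta E n k S') := by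
  have hl := P.l_pos
  have hE := P.hE
  have hd := h.nonneg
  have h2 : 0 < 2 / (2 * (n - k) + 3) := by positivity
  have h3 : 2 / (2 * (n - k) + 3) ≤ 1 := by rw [div_le_one hl]; linarith [P.hkn]
  unfold theta
  rw [mul_div_right_comm, mul_div_right_comm]
  refine Nr.max' (Nr.min' ?_ ?_) ?_
  · exact ((Nr.zero _).add h).mono (by nlinarith)
  · exact ((Nr.zero _).add ((h.add (Nr.zero _)).mul _ h2.le)).mono (by nlinarith)
  · exact ((Nr.zero _).add ((h.sub (Nr.zero _)).mul _ P.E_pos.le)).mono (by nlinarith)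

theorem sigm_Nr (P : Par β E n k) {d S S' : ℝ} (h : Nr d S S') :
    Nr ((2 * (n - k) + 3) * d) (sigm E n k S) (sigm E n k S') := by
  have hl := P.l_pos
  have hkn := P.hkn
  have hE := P.hE
  have hd := h.nonneg
  have h2 : 0 < 1 / E := by have := P.E_pos; positivity
  have h3 : 1 / E ≤ 1 := by rw [div_le_one P.E_pos]; linarith
  have e2 : ∀ y, y * (2 * (n - k) + 3) / 2 = (2 * (n - k) + 3) / 2 * y := fun y => by ring
  unfold sigm
  rw [e2, e2]
  refine Nr.min' (Nr.max' ?_ ?_) ?_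
  · exact (h.sub (Nr.zero _)).mono (by nlinarith)
  · exact ((Nr.zero _).add ((h.sub (Nr.zero _)).mul _ (by linarith))).mono (by nlinarith)
  · exact ((Nr.zero _).add (((h.sub (Nr.zero _)).sub (Nr.zero _)).div1 E (by linarith))).mono
      (by nlinarith)

theorem gg_Nr (P : Par β E n k) {d x x' : ℝ} (h : Nr d x x') : Nr (E * d) (gg β E x) (gg β E x') := by
  have hE := P.hE
  have hd := h.nonneg
  unfold gg
  refine Nr.max' ?_ ?_
  · exact h.mono (by nlinarith)
  · exact ((((Nr.zero β).sub h)).mul _ P.E_pos.le).mono (by linarith)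

theorem stG_Nr (P : Par β E n k) {d : ℝ} {z z' : ℝ × ℝ} (h1 : Nr d z.1 z'.1) (h2 : Nr d z.2 z'.2) :
    Nr (16 * E ^ 2 * (n + 3) * d) (stG β E n k z).1 (stG β E n k z').1 ∧
    Nr (16 * E ^ 2 * (n + 3) * d) (stG β E n k z).2 (stG β E n k z').2 := by
  have hE := P.hE
  have hE0 := P.E_pos
  have hn : 0 ≤ n := P.hk.trans P.hkn
  have hd := h1.nonneg
  have hX : Nr (E * d + d) (stX β E n z.1 z.2) (stX β E n z'.1 z'.2) :=
    (P.gg_Nr h1).add (((h2.sub (Nr.zero (n+2))).mono (by simp)).max' (Nr.refl hd 0))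
  have hV : Nr d (min (z.2 - (n + 2)) 0) (min (z'.2 - (n + 2)) 0) :=
    ((h2.sub (Nr.zero (n+2))).mono (by simp)).min' (Nr.refl hd 0)
  have hL : Nr ((n + 2) * (16 * E * d)) ((n + 2) * (16 * E * (β - z.1) - 1))
      ((n + 2) * (16 * E * (β - z'.1) - 1)) :=
    ((((((Nr.zero β).sub h1).mul (16 * E) (by linarith)).sub (Nr.zero 1)).mul (n+2)
      (by linarith))).mono (by linarith)
  have hle : d ≤ (n + 2) * (16 * E * d) := by
    have h1 : d ≤ E * d := by nlinarith
    have h2 : 0 ≤ E * d := by positivity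
    nlinarith
  have hS : Nr (3 * d + (n + 2) * (16 * E * d)) (stS β E n z.1 z.2) (stS β E n z'.1 z'.2) := by
    unfold stS
    exact (((hX.sub h1).mono (by nlinarith)).div E hE0).add
      ((hV.mono hle).max' ((hV.neg.mono hle).min' hL))
  have hT := P.theta_Nr hS
  have h5 : E * d ≤ E ^ 2 * d := by nlinarith
  have h6 : 0 ≤ E ^ 2 * d := by positivity
  have h7 : 0 ≤ n * (E ^ 2 * d) := by positivity
  refine ⟨hX.mono ?_, hT.mono ?_⟩
  · nlinarith
  · nlinarith

theorem stJ_Nr (P : Par β E n k) {d : ℝ} {z z' : ℝ × ℝ} (h1 : Nr d z.1 z'.1) (h2 : Nr d z.2 z'.2) :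
    Nr (16 * E ^ 2 * (n + 3) * d) (stJ β E n k z).1 (stJ β E n k z').1 ∧
    Nr (16 * E ^ 2 * (n + 3) * d) (stJ β E n k z).2 (stJ β E n k z').2 := by
  have hE := P.hE
  have hE0 := P.E_pos
  have hk := P.hk
  have hkn := P.hkn
  have hl := P.l_pos
  have hd := h1.nonneg
  have hS := P.sigm_Nr h2
  set l := 2 * (n - k) + 3 with hldef
  have hl3 : 3 ≤ l := by linarith
  have hln : l ≤ 2 * n + 3 := by linarith
  have h2' : 0 < 1 / E := by positivity
  have h3 : 1 / E ≤ 1 := by rw [div_le_one P.E_pos]; linarith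
  have hld : 0 ≤ l * d := by positivity
  have hdl : d ≤ l * d := by nlinarith
  have hEl : l * d ≤ E * (l * d) := by nlinarith
  have hX : Nr (2 * E * (l * d)) (ivX β E z.1 (sigm E n k z.2)) (ivX β E z'.1 (sigm E n k z'.2)) := by
    unfold ivX
    refine Nr.max' (((Nr.zero β).sub (h1.div1 E (by linarith))).mono ?_)
      ((h1.mono ?_).min' ((h1.sub (hS.mul E hE0.le)).mono ?_))
    · nlinarith
    · nlinarith
    · nlinarith
  have hG := P.gg_Nr hX
  have hW : Nr (2 * d) ((z.1 - β + z.1 / E) / E) ((z'.1 - β + z'.1 / E) / E) := by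
    exact (((h1.sub (Nr.zero β)).add (h1.div1 E (by linarith))).div1 E (by linarith)).mono
      (by linarith)
  have hT : Nr (d + E * (2 * E * (l * d)) + l * d + (l * d + 2 * d))
      (ivT β E n z.1 (sigm E n k z.2)) (ivT β E n z'.1 (sigm E n k z'.2)) := by
    unfold ivT
    exact ((((Nr.zero (n+2)).add (h1.sub hG)).mono (by simp)).add
      (hS.min' (Nr.refl hld 0))).sub ((hS.sub hW).max' (Nr.refl (by linarith) 0))
  have h5 : E * (l * d) ≤ E ^ 2 * (l * d) := by nlinarith
  have h6 : 0 ≤ E ^ 2 * d := by positivity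
  have h7 : 0 ≤ n * (E ^ 2 * d) := by
    have : 0 ≤ n := by linarith
    positivity
  have h8 : E ^ 2 * (l * d) ≤ (2 * n + 3) * (E ^ 2 * d) := by nlinarith
  refine ⟨hX.mono ?_, hT.mono ?_⟩
  · nlinarith
  · nlinarith

end Par
end CF

end PartC

section PartC2

open Set Metric

namespace CF
namespace Par
variable {β E n k : ℝ}

theorem st_R (P : Par β E n k) {x t : ℝ} (hx : β ≤ x) (ht : 0 ≤ t) (hth : t ≤ n + 2) :
    stX β E n x t = x ∧ stS β E n x t = t - (n + 2) := by
  have hE := P.hE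
  have hb := P.hb
  have hn : 0 ≤ n := P.hk.trans P.hkn
  have h1 : stX β E n x t = x := by
    unfold stX gg
    rw [max_eq_right (by linarith : t - (n+2) ≤ 0), max_eq_left (by nlinarith)]
    ring
  refine ⟨h1, ?_⟩
  unfold stS
  rw [h1, min_eq_left (by linarith : t - (n+2) ≤ 0), min_eq_right, max_eq_left]
  · simp
  · nlinarith [mul_nonneg (by linarith : (0:ℝ) ≤ n+2) (mul_nonneg P.E_pos.le (by linarith : 0 ≤ x - β))]
  · nlinarith [mul_nonneg (by linarith : (0:ℝ) ≤ n+2) (mul_nonneg P.E_pos.le (by linarith : 0 ≤ x - β))]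

theorem st_L (P : Par β E n k) {u t : ℝ} (hu : β ≤ u) (ht : 0 ≤ t) (hth : t ≤ n + 2) :
    stX β E n (β - u / E) t = u ∧
    stS β E n (β - u / E) t = (u - (β - u / E)) / E + (n + 2) - t := by
  have hE := P.E_pos
  have hb := P.hb
  have hn : 0 ≤ n := P.hk.trans P.hkn
  have hue : 0 ≤ u / E := div_nonneg (by linarith) hE.le
  have he : E * (β - (β - u / E)) = u := by field_simp; ring
  have h1 : stX β E n (β - u / E) t = u := by
    unfold stX gg
    rw [max_eq_right (by linarith : t - (n+2) ≤ 0), he, max_eq_right (by linarith)]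
    ring
  refine ⟨h1, ?_⟩
  unfold stS
  rw [h1, min_eq_left (by linarith : t - (n+2) ≤ 0), mul_assoc 16, he, min_eq_left, max_eq_right]
  · ring
  · linarith
  · nlinarith [mul_nonneg (by linarith : (0:ℝ) ≤ n+2) (by linarith : (0:ℝ) ≤ 16 * u - 2)]

theorem st_T (P : Par β E n k) {x t : ℝ} (hth : n + 2 ≤ t) :
    stX β E n x t = gg β E x + (t - (n+2)) ∧
    stS β E n x t = (stX β E n x t - x) / E := by
  constructor
  · unfold stX
    rw [max_eq_left (by linarith)]
  · unfold stS
    rw [min_eq_right (by linarith : (0:ℝ) ≤ t - (n+2))]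
    have : max (0:ℝ) (min (-0) ((n + 2) * (16 * E * (β - x) - 1))) = 0 := by
      apply max_eq_left
      exact (min_le_left _ _).trans (by simp)
    rw [this]; ring

theorem tri (P : Par β E n k) {x t : ℝ} (ht : 0 ≤ t) (h0 : β ≤ stX β E n x t) :
    (x = stX β E n x t ∧ β ≤ x ∧ t ≤ n + 2 ∧ stS β E n x t = t - (n + 2)) ∨
    (n + 2 ≤ t ∧ t = n + 2 + (stX β E n x t - gg β E x) ∧
      stS β E n x t = (stX β E n x t - x) / E ∧ β - stX β E n x t / E ≤ x ∧ x ≤ stX β E n x t) ∨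
    (x = β - stX β E n x t / E ∧ t ≤ n + 2 ∧
      stS β E n x t = (stX β E n x t - x) / E + (n + 2) - t) := by
  have hE := P.E_pos
  rcases le_total t (n + 2) with h | h
  · have hX : stX β E n x t = gg β E x := by
      unfold stX
      rw [max_eq_right (by linarith : t - (n+2) ≤ 0), add_zero]
    rcases le_total (E * (β - x)) x with h' | h'
    · have hg : gg β E x = x := max_eq_left h'
      left
      have hx : β ≤ x := by rw [hX, hg] at h0; exact h0
      obtain ⟨h1, h2⟩ := P.st_R hx ht h
      exact ⟨h1.symm, hx, h, h2⟩
    · have hg : gg β E x = E * (β - x) := max_eq_right h'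
      right; right
      have hx : x = β - stX β E n x t / E := by
        rw [hX, hg]; field_simp; ring
      obtain ⟨h1, h2⟩ := P.st_L h0 ht h
      refine ⟨hx, h, ?_⟩
      rw [← hx] at h2
      exact h2
  · right; left
    obtain ⟨h1, h2⟩ := P.st_T (x := x) h
    refine ⟨h, by linarith, h2, ?_, ?_⟩
    · have h3 : E * (β - x) ≤ stX β E n x t := by
        have : E * (β - x) ≤ gg β E x := le_max_right _ _
        linarith
      have h4 : β - x ≤ stX β E n x t / E := by rw [le_div_iff₀ hE]; linarith
      linarith
    · have : x ≤ gg β E x := le_max_left _ _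
      linarith

theorem iv_R (P : Par β E n k) {u S : ℝ} (hu : β ≤ u) (hS : S ≤ 0) : ivX β E u S = u ∧ ivT β E n u S = n + 2 + S := by
  have hE := P.E_pos
  have hb := P.hb
  have hue : 0 ≤ u / E := div_nonneg (by linarith) hE.le
  have h1 : ivX β E u S = u := by
    unfold ivX
    rw [min_eq_left (by nlinarith), max_eq_right (by linarith)]
  refine ⟨h1, ?_⟩
  unfold ivT gg
  have h2 : S ≤ (u - β + u / E) / E := hS.trans (div_nonneg (by linarith) hE.le)
  rw [h1, min_eq_left hS, max_eq_right (by linarith : S - (u - β + u / E) / E ≤ 0),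
    max_eq_left (by nlinarith : E * (β - u) ≤ u)]
  ring

theorem iv_T (P : Par β E n k) {u S : ℝ} (hS : 0 ≤ S) (hS' : E * S ≤ u - β + u / E) :
    ivX β E u S = u - E * S ∧ ivT β E n u S = n + 2 + (u - gg β E (u - E * S)) := by
  have hE := P.E_pos
  have h1 : ivX β E u S = u - E * S := by
    unfold ivX
    rw [min_eq_right (by nlinarith), max_eq_right (by linarith)]
  refine ⟨h1, ?_⟩
  unfold ivT
  have h2 : S ≤ (u - β + u / E) / E := by rw [le_div_iff₀ hE]; linarith
  rw [h1, min_eq_right hS, max_eq_right (by linarith : S - (u - β + u / E) / E ≤ 0)]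
  ring

theorem iv_L (P : Par β E n k) {u S : ℝ} (hu : β ≤ u) (hS' : u - β + u / E ≤ E * S) :
    ivX β E u S = β - u / E ∧ ivT β E n u S = n + 2 - (S - (u - β + u / E) / E) := by
  have hE := P.E_pos
  have hb := P.hb
  have hue : 0 ≤ u / E := div_nonneg (by linarith) hE.le
  have hS : 0 ≤ S := by
    by_contra hc
    push Not at hc
    nlinarith
  have h1 : ivX β E u S = β - u / E := by
    unfold ivX
    rw [min_eq_right (by nlinarith), max_eq_left (by linarith)]
  have he : E * (β - (β - u / E)) = u := by field_simp; ring
  refine ⟨h1, ?_⟩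
  unfold ivT gg
  have h2 : (u - β + u / E) / E ≤ S := by rw [div_le_iff₀ hE]; linarith
  rw [h1, min_eq_right hS, max_eq_left (by linarith : 0 ≤ S - (u - β + u / E) / E), he,
    max_eq_right (by linarith)]
  ring

theorem iv_st (P : Par β E n k) {x t : ℝ} (ht : 0 ≤ t) (h0 : β ≤ stX β E n x t) :
    ivX β E (stX β E n x t) (stS β E n x t) = x ∧
    ivT β E n (stX β E n x t) (stS β E n x t) = t := by
  have hE := P.E_pos
  rcases P.tri ht h0 with ⟨h1, h2, h3, h4⟩ | ⟨h1, h2, h3, h4, h5⟩ | ⟨h1, h2, h3⟩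
  · obtain ⟨e1, e2⟩ := P.iv_R h0 (S := stS β E n x t) (by linarith)
    rw [e1, e2]
    exact ⟨h1.symm, by linarith⟩
  · have h6 : E * stS β E n x t = stX β E n x t - x := by rw [h3]; field_simp
    obtain ⟨e1, e2⟩ := P.iv_T (u := stX β E n x t) (S := stS β E n x t)
      (by rw [h3]; exact div_nonneg (by linarith) hE.le) (by linarith)
    have h7 : stX β E n x t - E * stS β E n x t = x := by linarith
    rw [e1, e2, h7]
    exact ⟨rfl, by linarith⟩
  · have h6 : E * ((stX β E n x t - x) / E) = stX β E n x t - x := by field_simp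
    have h8 : stX β E n x t - β + stX β E n x t / E = stX β E n x t - x := by linarith
    have h7 : stX β E n x t - β + stX β E n x t / E ≤ E * stS β E n x t := by
      rw [h3, h8]
      nlinarith
    obtain ⟨e1, e2⟩ := P.iv_L h0 h7
    rw [e1, e2, h8]
    exact ⟨h1.symm, by linarith⟩

/-- `J ∘ G = id` -/
theorem J_G (P : Par β E n k) {z : ℝ × ℝ} (ht : 0 ≤ z.2) (h0 : β ≤ (stG β E n k z).1) :
    stJ β E n k (stG β E n k z) = z := by
  have h := P.iv_st (x := z.1) ht h0
  simp only [stJ, stG, P.sigm_theta]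
  rw [h.1, h.2]

theorem sigm_bounds (P : Par β E n k) {t : ℝ} (h0 : 0 ≤ t) (h1 : t ≤ k + 5) :
    -(n + 2) ≤ sigm E n k t ∧ sigm E n k t ≤ n - k + 1 + 3 / E := by
  have hE := P.E_pos
  have hl := P.l_pos
  have hkn := P.hkn
  have hk := P.hk
  have h3 : 0 ≤ 3 / E := by positivity
  rcases P.sigm_cases t with ⟨h, hs⟩ | ⟨h, h', hs⟩ | ⟨h, hs⟩
  · constructor <;> linarith
  · have g1 : 0 ≤ (t - k) * (2 * (n - k) + 3) := by
      apply mul_nonneg <;> linarith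
    have g2 : (t - k) * (2 * (n - k) + 3) ≤ 2 * (2 * (n - k) + 3) :=
      mul_le_mul_of_nonneg_right (by linarith) hl.le
    constructor <;> linarith
  · have g1 : 0 ≤ (t - k - 2) / E := div_nonneg (by linarith) hE.le
    have g2 : (t - k - 2) / E ≤ 3 / E := div_le_div_of_nonneg_right (by linarith) hE.le
    constructor <;> linarith

theorem sigm_box (P : Par β E n k) {t : ℝ} (h0 : k + 2 ≤ t) : n - k + 1 ≤ sigm E n k t := by
  have hE := P.E_pos
  rcases P.sigm_cases t with ⟨h, hs⟩ | ⟨h, h', hs⟩ | ⟨h, hs⟩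
  · linarith
  · have : t = k + 2 := by linarith
    rw [hs, this]; linarith
  · have g1 : 0 ≤ (t - k - 2) / E := div_nonneg (by linarith) hE.le
    linarith

/-- Description of the inverse image. -/
theorem J_desc (P : Par β E n k) {u t : ℝ} (hu : β ≤ u) (hu1 : u ≤ 1) (h0 : 0 ≤ t) (h1 : t ≤ k + 5) :
    stG β E n k (stJ β E n k (u, t)) = (u, t) ∧
    0 ≤ (stJ β E n k (u, t)).2 ∧ (stJ β E n k (u, t)).2 ≤ n + 3 ∧
    (stJ β E n k (u, t)).1 ≤ 1 ∧ β - 1 / E ≤ (stJ β E n k (u, t)).1 ∧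
    ((t < k + 2 ∧ (stJ β E n k (u, t)).1 = u) ∨ n ≤ (stJ β E n k (u, t)).2 ∨
      (stJ β E n k (u, t)).1 ≤ β) := by
  have hE := P.E_pos
  have hE16 := P.hE
  have hb := P.hb
  have hkn := P.hkn
  have hk := P.hk
  obtain ⟨s1, s2⟩ := P.sigm_bounds h0 h1
  have hue : 0 ≤ u / E := div_nonneg (by linarith) hE.le
  have hue1 : u / E ≤ 1 / E := div_le_div_of_nonneg_right hu1 hE.le
  have h1E : 1 / E ≤ 1 / 16 := by
    apply one_div_le_one_div_of_le <;> linarith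
  have h3E : 3 / E = 3 * (1 / E) := by ring
  have h1E' : 0 < 1 / E := by positivity
  simp only [stJ]
  have suff : ∀ x y, ivX β E u (sigm E n k t) = x → ivT β E n u (sigm E n k t) = y →
    stX β E n x y = u → stS β E n x y = sigm E n k t → stG β E n k (x, y) = (u, t) := by
    intro x y _ _ h3 h4
    simp only [stG, h3, h4, P.theta_sigm]
  rcases le_total (sigm E n k t) 0 with hS | hS
  · obtain ⟨e1, e2⟩ := P.iv_R hu hS
    have hlt : t < k + 2 := by
      by_contra hc
      push Not at hc
      have := P.sigm_box hc
      linarith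
    obtain ⟨g1, g2⟩ := P.st_R hu (t := n + 2 + sigm E n k t) (by linarith) (by linarith)
    rw [e1, e2]
    refine ⟨suff _ _ e1 e2 g1 (by rw [g2]; ring), by linarith, by linarith, hu1, by linarith,
      Or.inl ⟨hlt, rfl⟩⟩
  · rcases le_total (E * sigm E n k t) (u - β + u / E) with hS' | hS'
    · obtain ⟨e1, e2⟩ := P.iv_T hS hS'
      have hES : 0 ≤ E * sigm E n k t := by positivity
      have hg0 : u - E * sigm E n k t ≤ gg β E (u - E * sigm E n k t) := le_max_left _ _
      have hg1 : gg β E (u - E * sigm E n k t) ≤ u := by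
        unfold gg
        apply max_le
        · linarith
        · have : β - (u - E * sigm E n k t) ≤ u / E := by linarith
          rw [le_div_iff₀ hE] at this
          linarith
      obtain ⟨g1, g2⟩ := P.st_T (x := u - E * sigm E n k t)
        (t := n + 2 + (u - gg β E (u - E * sigm E n k t))) (by linarith)
      have g1' : stX β E n (u - E * sigm E n k t)
        (n + 2 + (u - gg β E (u - E * sigm E n k t))) = u := by linarith
      rw [e1, e2]
      refine ⟨suff _ _ e1 e2 g1' ?_, by linarith, by linarith, by linarith, by linarith,
        Or.inr (Or.inl (by linarith))⟩
      rw [g2, g1']; field_simp; ring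
    · obtain ⟨e1, e2⟩ := P.iv_L hu hS'
      have hw0 : 0 ≤ (u - β + u / E) / E := div_nonneg (by linarith) hE.le
      have hw1 : (u - β + u / E) / E ≤ sigm E n k t := by rw [div_le_iff₀ hE]; linarith
      obtain ⟨g1, g2⟩ := P.st_L hu (t := n + 2 - (sigm E n k t - (u - β + u / E) / E))
        (by linarith) (by linarith)
      rw [e1, e2]
      refine ⟨suff _ _ e1 e2 g1 ?_, by linarith, by linarith, by linarith [P.hb1], by linarith,
        Or.inr (Or.inr (by linarith))⟩
      rw [g2, show u - (β - u / E) = u - β + u / E by ring]; ring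

theorem G_fix (P : Par β E n k) {x t : ℝ} (hx : β ≤ x) (h0 : 0 ≤ t) (h1 : t ≤ k) : stG β E n k (x, t) = (x, t) := by
  have hkn := P.hkn
  obtain ⟨g1, g2⟩ := P.st_R hx h0 (by linarith)
  simp only [stG, g1, g2]
  congr 1
  rcases P.theta_cases (t - (n + 2)) with ⟨g, e⟩ | ⟨g, g', e⟩ | ⟨g, e⟩
  · rw [e]; ring
  · have : t = k := by linarith
    rw [e, this, show k - (n + 2) + (n + 2 - k) = 0 by ring]; simp
  · linarith

theorem theta_ge (P : Par β E n k) {S : ℝ} (h : k - (n + 2) ≤ S) : k ≤ theta E n k S := by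
  have := P.theta_strictMono.monotone h
  have h2 : theta E n k (k - (n + 2)) = k := by
    rcases P.theta_cases (k - (n + 2)) with ⟨g, e⟩ | ⟨g, g', e⟩ | ⟨g, e⟩
    · rw [e]; ring
    · rw [e, show k - (n + 2) + (n + 2 - k) = 0 by ring]; simp
    · have := P.hkn; linarith
  linarith

/-- the arclength bound from the height bound -/
theorem S_le_of (P : Par β E n k) {S : ℝ} (h : theta E n k S ≤ k + 5) : S ≤ n - k + 1 + 3 / E := by
  have hE := P.E_pos
  have h3 : 0 ≤ 3 / E := by positivity
  rcases P.theta_cases S with ⟨g, e⟩ | ⟨g, g', e⟩ | ⟨g, e⟩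
  · have := P.hkn; linarith
  · linarith
  · have : S - (n - k + 1) ≤ 3 / E := by rw [le_div_iff₀ hE]; linarith
    linarith

theorem S_ge_of (P : Par β E n k) {S : ℝ} (h : k + 2 ≤ theta E n k S) : n - k + 1 ≤ S := by
  have := P.sigm_box h
  rwa [P.sigm_theta] at this

/-- stability below level k -/
theorem stable (P : Par β E n k) {z : ℝ × ℝ} (h0 : 0 ≤ z.2) (hb : β ≤ (stG β E n k z).1)
    (h5 : (stG β E n k z).2 ≤ k + 5) :
    (z.2 < k ∧ stG β E n k z = z) ∨ (k ≤ z.2 ∧ k ≤ (stG β E n k z).2) := by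
  obtain ⟨x, t⟩ := z
  simp only [stG] at h0 hb h5 ⊢
  have hE := P.E_pos
  have hE16 := P.hE
  have hbb := P.hb
  have hkn := P.hkn
  have hS5 := P.S_le_of h5
  have h1E : 3 / E ≤ 3 / 16 := by
    apply div_le_div_of_nonneg_left <;> linarith
  rcases P.tri h0 hb with ⟨h1, h2, h3, h4⟩ | ⟨h1, h2, h3, h4, h5⟩ | ⟨h1, h2, h3⟩
  · rcases lt_or_ge t k with h | h
    · exact Or.inl ⟨h, P.G_fix h2 h0 h.le⟩
    · exact Or.inr ⟨h, P.theta_ge (by linarith)⟩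
  · refine Or.inr ⟨by linarith, P.theta_ge ?_⟩
    have : 0 ≤ stS β E n x t := by
      rw [h3]; exact div_nonneg (by linarith) hE.le
    linarith
  · have h6 : 0 ≤ stX β E n x t / E := div_nonneg (by linarith) hE.le
    have h7 : 0 ≤ (stX β E n x t - x) / E := div_nonneg (by linarith) hE.le
    exact Or.inr ⟨by linarith, P.theta_ge (by linarith)⟩

theorem box (P : Par β E n k) {z : ℝ × ℝ} (h0 : 0 ≤ z.2) (hb : β ≤ (stG β E n k z).1) (hb1 : (stG β E n k z).1 ≤ 1)
    (h2 : k + 2 ≤ (stG β E n k z).2) (h5 : (stG β E n k z).2 ≤ k + 5) :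
    β - 1 / E ≤ z.1 ∧ z.1 ≤ β ∧ k + 1 - 3 / E ≤ z.2 ∧ z.2 ≤ k + 1 + 2 / E := by
  obtain ⟨x, t⟩ := z
  simp only [stG] at h0 hb hb1 h2 h5 ⊢
  have hE := P.E_pos
  have hE16 := P.hE
  have hbb := P.hb
  have hkn := P.hkn
  have hS5 := P.S_le_of h5
  have hS2 := P.S_ge_of h2
  have h1E : 3 / E ≤ 3 / 16 := by
    apply div_le_div_of_nonneg_left <;> linarith
  have h1E' : 1 / E ≤ 1 / 16 := by
    apply div_le_div_of_nonneg_left <;> linarith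
  have h6 : 0 ≤ stX β E n x t / E := div_nonneg (by linarith) hE.le
  have h7 : stX β E n x t / E ≤ 1 / E := div_le_div_of_nonneg_right hb1 hE.le
  have h2E : 2 / E = 1 / E + 1 / E := by ring
  rcases P.tri h0 hb with ⟨h1, h2, h3, h4⟩ | ⟨h1, h2, h3, h4, h5⟩ | ⟨h1, h2, h3⟩
  · linarith
  · have : (stX β E n x t - x) / E ≤ 2 / E := div_le_div_of_nonneg_right (by linarith) hE.le
    linarith
  · have g1 : (stX β E n x t - x) / E ≤ 2 / E := div_le_div_of_nonneg_right (by linarith) hE.le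
    have g2 : 0 ≤ (stX β E n x t - x) / E := div_nonneg (by linarith) hE.le
    refine ⟨by linarith, by linarith, by linarith, by linarith⟩

end Par
end CF

end PartC2

section PartD

open Set Metric

namespace CF

section gen
variable {K : Type*} [Field K] [LinearOrder K]
/-- expanding map of the Cantor set -/
def DD (x : K) : K := max (min (4 * x - 1) (3 - 4 * x)) (4 * x - 3)
end gen

theorem DD_cast (x : ℚ) : ((DD x : ℚ) : ℝ) = DD (x : ℝ) := by
  simp only [DD]; push_cast; rfl

theorem DDi_cast (i : ℕ) (x : ℚ) : ((DD^[i] x : ℚ) : ℝ) = DD^[i] (x : ℝ) := by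
  induction i generalizing x with
  | zero => rfl
  | succ i ih => rw [Function.iterate_succ_apply, Function.iterate_succ_apply, ih, DD_cast]

theorem DD_Nr {d x x' : ℝ} (h : Nr d x x') : Nr (4 * d) (DD x) (DD x') := by
  have h4 := Nr.mul 4 (by norm_num) h
  have h1 : ∀ c, Nr (4 * d) (4 * x - c) (4 * x' - c) := fun c =>
    (h4.sub (Nr.zero c)).mono (by linarith)
  have h2 : ∀ c, Nr (4 * d) (c - 4 * x) (c - 4 * x') := fun c =>
    ((Nr.zero c).sub h4).mono (by linarith)
  exact ((h1 1).min' (h2 3)).max' (h1 3)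

theorem DDi_Nr (i : ℕ) {d x x' : ℝ} (h : Nr d x x') :
    Nr (4 ^ i * d) (DD^[i] x) (DD^[i] x') := by
  induction i generalizing d x x' with
  | zero => simpa using h
  | succ i ih =>
    rw [Function.iterate_succ_apply, Function.iterate_succ_apply]
    exact (ih (DD_Nr h)).mono (by rw [pow_succ]; linarith)

theorem DD_lo {x : ℝ} (h : x ≤ 1 / 2) : DD x = 4 * x - 1 := by
  unfold DD; rw [min_eq_left (by linarith), max_eq_left (by linarith)]
theorem DD_hi {x : ℝ} (h : 3 / 4 ≤ x) : DD x = 4 * x - 3 := by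
  unfold DD; rw [min_eq_right (by linarith), max_eq_right (by linarith)]

theorem DD_cont : Continuous (DD : ℝ → ℝ) := by unfold DD; fun_prop
theorem DDi_cont (i : ℕ) : Continuous (DD^[i] : ℝ → ℝ) := DD_cont.iterate i

namespace Dat
variable (d : Dat)

/-- letter 0 killed at position i -/
def q0 (s i : ℕ) : Bool := decide (i % 2 = 0) && d.k0 s (i / 2)
/-- letter 1 killed at position i -/
def q1 (s i : ℕ) : Bool := decide (i % 2 = 0) && d.k1 s (i / 2)

theorem q0_mono {s s' i : ℕ} (h : s ≤ s') (hq : d.q0 s i = true) : d.q0 s' i = true := by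
  simp only [q0, Bool.and_eq_true] at *
  exact ⟨hq.1, d.k0_mono _ _ _ h hq.2⟩
theorem q1_mono {s s' i : ℕ} (h : s ≤ s') (hq : d.q1 s i = true) : d.q1 s' i = true := by
  simp only [q1, Bool.and_eq_true] at *
  exact ⟨hq.1, d.k1_mono _ _ _ h hq.2⟩
theorem q_disj {s s' i : ℕ} (hq : d.q0 s i = true) (hq' : d.q1 s' i = true) : False := by
  simp only [q0, q1, Bool.and_eq_true] at *
  exact d.k_disj _ _ _ hq.2 hq'.2

section gen
variable {K : Type*} [Field K] [LinearOrder K]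
/-- violation amount of stage s constraint at position i -/
def out (s i : ℕ) (v : K) : K :=
  if i < s then
    if d.q0 s i = true then max (3 / 4 - v) (v - 1)
    else if d.q1 s i = true then max (1 / 4 - v) (v - 1 / 2)
    else max (max (1 / 4 - v) (v - 1)) (min (v - 1 / 2) (3 / 4 - v))
  else -1
end gen

theorem out_cast (s i : ℕ) (v : ℚ) : ((d.out s i v : ℚ) : ℝ) = d.out s i (v : ℝ) := by
  unfold out
  split_ifs <;> push_cast <;> rfl

theorem out_Nr (s i : ℕ) {e v v' : ℝ} (h : Nr e v v') : Nr e (d.out s i v) (d.out s i v') := by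
  have h1 : ∀ c, Nr e (v - c) (v' - c) := fun c => (h.sub (Nr.zero c)).mono (by linarith)
  have h2 : ∀ c, Nr e (c - v) (c - v') := fun c => ((Nr.zero c).sub h).mono (by linarith)
  unfold out
  split_ifs
  · exact (h2 _).max' (h1 _)
  · exact (h2 _).max' (h1 _)
  · exact ((h2 _).max' (h1 _)).max' ((h1 _).min' (h2 _))
  · exact Nr.refl h.nonneg _

theorem out_le_iff {s i : ℕ} (h : i < s) (v : ℝ) : d.out s i v ≤ 0 ↔
    ((1 / 4 ≤ v ∧ v ≤ 1 / 2 ∧ d.q0 s i = false) ∨ (3 / 4 ≤ v ∧ v ≤ 1 ∧ d.q1 s i = false)) := by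
  unfold out
  rw [if_pos h]
  split_ifs with h0 h1
  · have : d.q1 s i = false := by
      by_contra hc
      exact d.q_disj h0 (by simpa using hc)
    simp only [max_le_iff, h0, this]
    constructor
    · intro hv; right; exact ⟨by linarith, by linarith, trivial⟩
    · rintro (hv | hv)
      · simp at hv
      · constructor <;> linarith
  · simp only [max_le_iff, h1, eq_false_of_ne_true h0]
    constructor
    · intro hv; left; exact ⟨by linarith, by linarith, trivial⟩
    · rintro (hv | hv)
      · constructor <;> linarith
      · simp at hv
  · simp only [max_le_iff, min_le_iff, eq_false_of_ne_true h1, eq_false_of_ne_true h0]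
    constructor
    · rintro ⟨hv, hw | hw⟩
      · left; exact ⟨by linarith, by linarith, trivial⟩
      · right; exact ⟨by linarith, by linarith, trivial⟩
    · rintro (hv | hv)
      · exact ⟨⟨by linarith, by linarith⟩, Or.inl (by linarith)⟩
      · exact ⟨⟨by linarith, by linarith⟩, Or.inr (by linarith)⟩

/-- stage s approximation -/
def PS (s : ℕ) : Set ℝ := {x | ∀ i < s, d.out s i (DD^[i] x) ≤ 0}

theorem PS_anti {s s' : ℕ} (h : s ≤ s') : d.PS s' ⊆ d.PS s := by
  intro x hx i hi
  have := hx i (hi.trans_le h)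
  rw [d.out_le_iff (hi.trans_le h)] at this
  rw [d.out_le_iff hi]
  rcases this with ⟨a, b, c⟩ | ⟨a, b, c⟩
  · left; refine ⟨a, b, ?_⟩
    by_contra hc
    rw [d.q0_mono h (by simpa using hc)] at c; cases c
  · right; refine ⟨a, b, ?_⟩
    by_contra hc
    rw [d.q1_mono h (by simpa using hc)] at c; cases c

/-- the limit set -/
def PP : Set ℝ := {x | ∀ s, x ∈ d.PS s}

/-- leftmost letters -/
def yy (s i : ℕ) : ℕ := if d.q0 s i = true then 3 else 1
/-- leftmost address -/
def bN (s : ℕ) : ℕ → ℕ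
  | 0 => 0
  | m + 1 => 4 * bN s m + d.yy s m
/-- numerator of beta -/
def bnum (s : ℕ) : ℕ := 8 * d.bN s s + 1
/-- denominator of beta -/
def bden (s : ℕ) : ℕ := 8 * 4 ^ s
/-- the folding position -/
noncomputable def be (s : ℕ) : ℝ := (d.bnum s : ℝ) / (bden s : ℝ)

theorem be_eq (s : ℕ) : d.be s = (d.bN s s : ℝ) / 4 ^ s + 1 / (8 * 4 ^ s) := by
  unfold be bnum bden; push_cast; field_simp

theorem P_lower_aux {s s' : ℕ} (hs : s ≤ s') {x : ℝ} (hx : x ∈ d.PS s') (m : ℕ) (hm : m ≤ s) :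
    (d.bN s m : ℝ) + DD^[m] x ≤ 4 ^ m * x := by
  induction m with
  | zero => simp [bN]
  | succ m ih =>
    have ih := ih (by omega)
    have h := d.PS_anti hs hx m (by omega)
    rw [d.out_le_iff (by omega)] at h
    rw [Function.iterate_succ_apply', pow_succ]
    simp only [bN, yy]
    rcases h with ⟨a, b, c⟩ | ⟨a, b, c⟩
    · rw [DD_lo b]; simp only [c]; push_cast; simp; linarith
    · rw [DD_hi a]; split_ifs <;> push_cast <;> linarith

theorem P_lower {s s' : ℕ} (hs : s < s') {x : ℝ} (hx : x ∈ d.PS s') : d.be s ≤ x := by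
  have h := d.P_lower_aux hs.le hx s le_rfl
  have h1 := hx s hs
  rw [d.out_le_iff hs] at h1
  have h2 : 1 / 4 ≤ DD^[s] x := by rcases h1 with h1 | h1 <;> linarith
  rw [be_eq]
  have h4 : (0 : ℝ) < 4 ^ s := by positivity
  rw [show (d.bN s s : ℝ) / 4 ^ s + 1 / (8 * 4 ^ s) = ((d.bN s s : ℝ) + 1 / 8) / 4 ^ s by field_simp]
  rw [div_le_iff₀ h4]
  linarith

theorem P_addr {s : ℕ} {x : ℝ} (h0 : (d.bN s s : ℝ) ≤ 4 ^ s * x) (h1 : 4 ^ s * x ≤ d.bN s s + 1)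
    (m : ℕ) : m ≤ s → (d.bN s (s - m) : ℝ) ≤ 4 ^ (s - m) * x ∧ 4 ^ (s - m) * x ≤ d.bN s (s - m) + 1 := by
  induction m with
  | zero => intro _; exact ⟨h0, h1⟩
  | succ m ih =>
    intro hm
    have := ih (by omega)
    obtain ⟨k, hk⟩ : ∃ k, k = s - (m + 1) := ⟨_, rfl⟩
    rw [← hk]
    rw [show s - m = k + 1 by omega, pow_succ] at this
    simp only [bN, yy] at this
    push_cast at this
    split_ifs at this <;> push_cast at this <;> constructor <;> linarith

theorem P_mem {s : ℕ} {x : ℝ} (h0 : d.be s - 1 / (8 * 4 ^ s) ≤ x) (h1 : x ≤ d.be s) : x ∈ d.PS s := by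
  rw [be_eq] at h0 h1
  have h4 : (0 : ℝ) < 4 ^ s := by positivity
  have h0' : (d.bN s s : ℝ) ≤ 4 ^ s * x := by
    have : (d.bN s s : ℝ) / 4 ^ s ≤ x := by linarith
    rw [div_le_iff₀ h4] at this; linarith
  have h1' : 4 ^ s * x ≤ d.bN s s + 1 := by
    rw [show (d.bN s s : ℝ) / 4 ^ s + 1 / (8 * 4 ^ s) = ((d.bN s s : ℝ) + 1 / 8) / 4 ^ s by field_simp,
      le_div_iff₀ h4] at h1
    linarith
  have key : ∀ m ≤ s, (d.bN s m : ℝ) ≤ 4 ^ m * x ∧ 4 ^ m * x ≤ d.bN s m + 1 := by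
    intro m hm
    have := d.P_addr h0' h1' (s - m) (by omega)
    rwa [show s - (s - m) = m by omega] at this
  have it : ∀ m, m ≤ s → DD^[m] x = 4 ^ m * x - d.bN s m := by
    intro m
    induction m with
    | zero => intro _; simp [bN]
    | succ m ih =>
      intro hm
      have k1 := key (m + 1) hm
      rw [pow_succ] at k1
      rw [Function.iterate_succ_apply', ih (by omega), pow_succ]
      simp only [bN, yy] at k1 ⊢
      split_ifs at k1 ⊢
      · push_cast at k1 ⊢
        rw [DD_hi (by linarith)]; ring
      · push_cast at k1 ⊢
        rw [DD_lo (by linarith)]; ring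
  intro i hi
  rw [d.out_le_iff hi, it i hi.le]
  have k1 := key (i + 1) hi
  rw [pow_succ] at k1
  simp only [bN, yy] at k1
  split_ifs at k1 with hq
  · right
    push_cast at k1
    refine ⟨by linarith, by linarith, ?_⟩
    by_contra hc
    exact d.q_disj hq (by simpa using hc)
  · left
    push_cast at k1
    exact ⟨by linarith, by linarith, eq_false_of_ne_true hq⟩

theorem bN_bd (s m : ℕ) : d.bN s m + 1 ≤ 4 ^ m ∧ (0 < m → 4 ^ m ≤ 4 * d.bN s m) := by
  induction m with
  | zero => simp [bN]
  | succ m ih =>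
    simp only [bN, yy, pow_succ]
    rcases Nat.eq_zero_or_pos m with rfl | h
    · simp [bN]; split_ifs <;> omega
    · have := ih.2 h
      split_ifs <;> omega

theorem be_lo (s : ℕ) : 1 / 8 ≤ d.be s := by
  unfold be bnum bden
  rw [div_le_div_iff₀ (by norm_num) (by positivity)]
  norm_cast
  rcases Nat.eq_zero_or_pos s with rfl | h
  · simp
  · have := (d.bN_bd s s).2 h
    omega
theorem be_hi (s : ℕ) : d.be s ≤ 1 := by
  unfold be bnum bden
  rw [div_le_one (by positivity)]
  norm_cast
  have := (d.bN_bd s s).1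
  omega

end Dat
end CF

end PartD

section PartD2

open Set Metric

namespace CF

/-- value of a ternary 0-2 sequence -/
noncomputable def cv (a : ℕ → Bool) : ℝ := Real.ofDigits (fun i => bif a i then (2 : Fin 3) else 0)

theorem cv_eq (a : ℕ → Bool) :
    cv a = ∑' i : ℕ, 2 * (if a i then (1 : ℝ) else 0) * (3 : ℝ) ^ (-((i : ℤ) + 1)) := by
  unfold cv Real.ofDigits Real.ofDigitsTerm
  congr 1
  ext i
  rw [zpow_neg]
  have : ((3 : ℝ) ^ ((i : ℤ) + 1)) = 3 ^ (i + 1) := by norm_cast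
  rw [this]
  cases h : a i <;> simp [h]

theorem cv_cont : Continuous cv := by
  unfold cv
  refine Real.continuous_ofDigits.comp ?_
  refine continuous_pi fun i => ?_
  exact (continuous_of_discreteTopology (f := fun b : Bool => bif b then (2 : Fin 3) else 0)).comp
    (continuous_apply i)

theorem cv_inj : Function.Injective cv := by
  intro a b h
  have := ofDigits_zero_two_sequence_unique (a := fun i => bif a i then (2 : Fin 3) else 0)
    (b := fun i => bif b i then (2 : Fin 3) else 0) (by intro n; cases a n <;> simp)
    (by intro n; cases b n <;> simp) h
  ext i
  have := congrFun this i
  revert this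
  cases a i <;> cases b i <;> simp

/-- value of a base 4 sequence with digits 1,3 -/
noncomputable def v4 (a : ℕ → Bool) : ℝ := Real.ofDigits (fun i => bif a i then (3 : Fin 4) else 1)

theorem v4_step (a : ℕ → Bool) : 4 * v4 a = (if a 0 then 3 else 1) + v4 (fun i => a (i + 1)) := by
  unfold v4
  rw [Real.ofDigits_eq_sum_add_ofDigits _ 1]
  simp only [Finset.range_one, Finset.sum_singleton, Real.ofDigitsTerm]
  cases a 0 <;> norm_num <;> ring

theorem v4_bd (a : ℕ → Bool) : 0 ≤ v4 a ∧ v4 a ≤ 1 :=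
  ⟨Real.ofDigits_nonneg _, Real.ofDigits_le_one _⟩

theorem DD_v4 (a : ℕ → Bool) : DD (v4 a) = v4 (fun i => a (i + 1)) := by
  have h := v4_step a
  have hb := v4_bd (fun i => a (i + 1))
  split_ifs at h
  · rw [DD_hi (by linarith)]; linarith
  · rw [DD_lo (by linarith)]; linarith

theorem DDi_v4 (i : ℕ) (a : ℕ → Bool) : DD^[i] (v4 a) = v4 (fun j => a (j + i)) := by
  induction i with
  | zero => rfl
  | succ i ih =>
    rw [Function.iterate_succ_apply', ih, DD_v4]
    congr 1
    ext j
    congr 1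
    omega

open Classical in
/-- itinerary -/
noncomputable def lett (x : ℝ) (i : ℕ) : Bool := decide (5 / 8 < DD^[i] x)

theorem lett_v4 (a : ℕ → Bool) : lett (v4 a) = a := by
  ext i
  unfold lett
  rw [DDi_v4]
  have h := v4_step (fun j => a (j + i))
  have hb := v4_bd (fun j => a (j + 1 + i))
  simp only [zero_add] at h
  cases hi : a i
  · simp [hi] at h
    simp
    linarith
  · simp [hi] at h
    simp
    linarith

namespace Dat
variable (d : Dat)

theorem PP_cases {x : ℝ} (hx : x ∈ d.PP) (i : ℕ) :
    (1 / 4 ≤ DD^[i] x ∧ DD^[i] x ≤ 1 / 2 ∧ lett x i = false ∧ ∀ s, d.q0 s i = false) ∨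
    (3 / 4 ≤ DD^[i] x ∧ DD^[i] x ≤ 1 ∧ lett x i = true ∧ ∀ s, d.q1 s i = false) := by
  have h : ∀ s, i < s → _ := fun s hs => (d.out_le_iff hs _).1 (hx s i hs)
  rcases h (i + 1) (by omega) with ⟨a, b, _⟩ | ⟨a, b, _⟩
  · left
    refine ⟨a, b, by unfold lett; simp; linarith, fun s => ?_⟩
    rcases h (max s (i + 1)) (by omega) with ⟨_, _, c⟩ | ⟨a', _⟩
    · by_contra hc
      rw [d.q0_mono (le_max_left s (i + 1)) (by simpa using hc)] at c; cases c
    · linarith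
  · right
    refine ⟨a, b, by unfold lett; simp; linarith, fun s => ?_⟩
    rcases h (max s (i + 1)) (by omega) with ⟨_, b', c⟩ | ⟨_, _, c⟩
    · linarith
    · by_contra hc
      rw [d.q1_mono (le_max_left s (i + 1)) (by simpa using hc)] at c; cases c

/-- admissible sequences -/
def XX : Set (ℕ → Bool) := {a | ∀ e s, (d.k0 s e = true → a (2 * e) = true) ∧
  (d.k1 s e = true → a (2 * e) = false)}

theorem lett_mem {x : ℝ} (hx : x ∈ d.PP) : lett x ∈ d.XX := by
  intro e s
  have h2 : 2 * e / 2 = e := by omega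
  have h3 : 2 * e % 2 = 0 := by omega
  rcases d.PP_cases hx (2 * e) with ⟨_, _, c, h⟩ | ⟨_, _, c, h⟩
  · have := h s
    simp only [q0, h2, h3] at this
    simp at this
    simp [this, c]
  · have := h s
    simp only [q1, h2, h3] at this
    simp at this
    simp [this, c]

theorem v4_mem {a : ℕ → Bool} (ha : a ∈ d.XX) : v4 a ∈ d.PP := by
  intro s i hi
  rw [d.out_le_iff hi, DDi_v4]
  have h := v4_step (fun j => a (j + i))
  have hb := v4_bd (fun j => a (j + 1 + i))
  simp only [zero_add] at h
  cases hi : a i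
  · left
    simp [hi] at h
    refine ⟨by linarith, by linarith, ?_⟩
    by_contra hc
    simp only [q0, Bool.not_eq_false, Bool.and_eq_true, decide_eq_true_eq] at hc
    have := (ha (i / 2) s).1 hc.2
    rw [show 2 * (i / 2) = i by omega, hi] at this
    cases this
  · right
    simp [hi] at h
    refine ⟨by linarith, by linarith, ?_⟩
    by_contra hc
    simp only [q1, Bool.not_eq_false, Bool.and_eq_true, decide_eq_true_eq] at hc
    have := (ha (i / 2) s).2 hc.2
    rw [show 2 * (i / 2) = i by omega, hi] at this
    cases this

theorem lett_inj : InjOn lett d.PP := by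
  intro x hx y hy h
  have key : ∀ i, DD^[i] x - DD^[i] y = 4 ^ i * (x - y) := by
    intro i
    induction i with
    | zero => simp
    | succ i ih =>
      have hi := congrFun h i
      rw [Function.iterate_succ_apply', Function.iterate_succ_apply', pow_succ]
      rcases d.PP_cases hx i with ⟨_, b, c, _⟩ | ⟨b, _, c, _⟩ <;>
      rcases d.PP_cases hy i with ⟨_, b', c', _⟩ | ⟨b', _, c', _⟩
      · rw [DD_lo b, DD_lo b']; linarith
      · rw [hi, c'] at c; cases c
      · rw [hi, c'] at c; cases c
      · rw [DD_hi b, DD_hi b']; linarith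
  have bd : ∀ i, 4 ^ i * |x - y| ≤ 1 := by
    intro i
    have : 4 ^ i * |x - y| = |DD^[i] x - DD^[i] y| := by
      rw [key, abs_mul, abs_of_pos (by positivity : (0 : ℝ) < 4 ^ i)]
    rw [this, abs_le]
    rcases d.PP_cases hx i with ⟨a, b, _⟩ | ⟨a, b, _⟩ <;>
      rcases d.PP_cases hy i with ⟨a', b', _⟩ | ⟨a', b', _⟩ <;> constructor <;> linarith
  by_contra hne
  have hpos : 0 < |x - y| := abs_pos.2 (sub_ne_zero.2 hne)
  obtain ⟨n, hn⟩ := pow_unbounded_of_one_lt (1 / |x - y|) (by norm_num : (1 : ℝ) < 4)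
  rw [div_lt_iff₀ hpos] at hn
  exact absurd (bd n) (not_le.2 hn)

theorem lett_cont : ContinuousOn lett d.PP := by
  refine continuousOn_pi.2 fun i x hx => ?_
  have hc : ContinuousAt (DD^[i] : ℝ → ℝ) x := (DDi_cont i).continuousAt
  refine ContinuousAt.continuousWithinAt ?_
  rcases d.PP_cases hx i with ⟨a, b, c, _⟩ | ⟨a, b, c, _⟩
  · have h1 : ∀ᶠ y in nhds x, DD^[i] y < 5 / 8 := hc.eventually_lt_const (by linarith)
    refine (continuousAt_const (y := false)).congr ?_
    filter_upwards [h1] with y hy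
    unfold lett
    simp; linarith
  · have h1 : ∀ᶠ y in nhds x, 5 / 8 < DD^[i] y := hc.eventually_const_lt (by linarith)
    refine (continuousAt_const (y := true)).congr ?_
    filter_upwards [h1] with y hy
    unfold lett
    simp; linarith

/-- a free position -/
def free (e : ℕ) : Prop := ∀ s, d.k0 s e = false ∧ d.k1 s e = false

open Classical in
/-- index map -/
noncomputable def bi (i j : ℕ) : ℕ :=
  if d.free i then (if j = 0 then 2 * i else 2 * Nat.pair i (j - 1) + 1) else 2 * Nat.pair i j + 1
/-- straightening -/
noncomputable def BB (a : ℕ → Bool) (n : ℕ) : Bool := a (d.bi n.unpair.1 n.unpair.2)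

open Classical in
/-- inverse straightening -/
noncomputable def CC (b : ℕ → Bool) (m : ℕ) : Bool :=
  if m % 2 = 0 then
    if d.free (m / 2) then b (Nat.pair (m / 2) 0) else decide (∃ s, d.k0 s (m / 2) = true)
  else b (Nat.pair (m / 2).unpair.1 (if d.free (m / 2).unpair.1 then (m / 2).unpair.2 + 1
    else (m / 2).unpair.2))

theorem BB_cont : Continuous d.BB := continuous_pi fun n => continuous_apply _

theorem CC_mem (b : ℕ → Bool) : d.CC b ∈ d.XX := by
  intro e s
  have h2 : 2 * e / 2 = e := by omega
  have h3 : 2 * e % 2 = 0 := by omega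
  simp only [CC, h2, h3, if_true]
  constructor
  · intro h
    rw [if_neg]
    · simpa using ⟨s, h⟩
    · intro hf; have := (hf s).1; rw [h2, h] at this; cases this
  · intro h
    rw [if_neg]
    · simp only [decide_eq_false_iff_not, not_exists]
      intro s' h'
      rw [h2] at h'
      exact d.k_disj _ _ _ h' h
    · intro hf; have := (hf s).2; rw [h2, h] at this; cases this

theorem BB_CC (b : ℕ → Bool) : d.BB (d.CC b) = b := by
  ext n
  have hu := Nat.pair_unpair n
  simp only [BB, bi]
  split_ifs with hf hj
  · simp only [CC]
    rw [if_pos (by omega), show 2 * n.unpair.1 / 2 = n.unpair.1 by omega, if_pos hf, ← hj, hu]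
  · simp only [CC]
    rw [if_neg (by omega), show (2 * Nat.pair n.unpair.1 (n.unpair.2 - 1) + 1) / 2 =
      Nat.pair n.unpair.1 (n.unpair.2 - 1) by omega, Nat.unpair_pair]
    simp only
    rw [if_pos hf, show n.unpair.2 - 1 + 1 = n.unpair.2 by omega, hu]
  · simp only [CC]
    rw [if_neg (by omega), show (2 * Nat.pair n.unpair.1 n.unpair.2 + 1) / 2 =
      Nat.pair n.unpair.1 n.unpair.2 by omega, Nat.unpair_pair]
    simp only
    rw [if_neg hf, hu]

theorem BB_inj : InjOn d.BB d.XX := by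
  intro a ha b hb h
  ext m
  rcases Nat.even_or_odd' m with ⟨e, rfl | rfl⟩
  · by_cases hf : d.free e
    · have := congrFun h (Nat.pair e 0)
      simp only [BB, bi, Nat.unpair_pair, hf, if_true] at this
      rw [this]
    · simp only [free, not_forall, not_and_or, Bool.not_eq_false] at hf
      obtain ⟨s, hs | hs⟩ := hf
      · rw [(ha e s).1 hs, (hb e s).1 hs]
      · rw [(ha e s).2 hs, (hb e s).2 hs]
  · have hu := Nat.pair_unpair e
    by_cases hf : d.free e.unpair.1
    · have := congrFun h (Nat.pair e.unpair.1 (e.unpair.2 + 1))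
      simp only [BB, bi, Nat.unpair_pair, hf, if_true] at this
      simp [hu] at this
      rw [this]
    · have := congrFun h (Nat.pair e.unpair.1 e.unpair.2)
      simp only [BB, bi, Nat.unpair_pair, hf, if_false] at this
      simp [hu] at this
      rw [this]

/-- the homeomorphism from PP onto the Cantor set -/
noncomputable def Th (x : ℝ) : ℝ := cv (d.BB (lett x))

theorem Th_cont : ContinuousOn d.Th d.PP :=
  (cv_cont.comp d.BB_cont).comp_continuousOn d.lett_cont
theorem Th_inj : InjOn d.Th d.PP := by
  intro x hx y hy h
  exact d.lett_inj hx hy (d.BB_inj (d.lett_mem hx) (d.lett_mem hy) (cv_inj h))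
theorem Th_mem (x : ℝ) : d.Th x ∈ middleThirdsCantorSet := ⟨_, cv_eq _⟩
theorem Th_surj {c : ℝ} (hc : c ∈ middleThirdsCantorSet) : ∃ x ∈ d.PP, d.Th x = c := by
  obtain ⟨a, rfl⟩ := hc
  refine ⟨v4 (d.CC a), d.v4_mem (d.CC_mem a), ?_⟩
  rw [Th, lett_v4, BB_CC, cv_eq]
theorem PP_nonempty : d.PP.Nonempty := ⟨_, d.v4_mem (d.CC_mem fun _ => true)⟩
theorem Th_bd (x : ℝ) : 0 ≤ d.Th x ∧ d.Th x ≤ 1 :=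
  ⟨Real.ofDigits_nonneg _, Real.ofDigits_le_one _⟩

end Dat
end CF

end PartD2

section PartE

open Set Metric

namespace CF
namespace Dat
variable (d : Dat)

/-- levels -/
def nu : ℕ → ℕ
  | 0 => 0
  | s + 1 => min (d.f s) (nu s) + 1
/-- target levels -/
def ka (s : ℕ) : ℕ := min (d.f s) (d.nu s)
/-- Lipschitz constants -/
def MM : ℕ → ℕ
  | 0 => 1
  | s + 1 => MM s * (16 * (4 ^ (s + 2) * MM s) ^ 2 * (2 * d.nu s + 3))
/-- steepness -/
def EE (s : ℕ) : ℕ := 4 ^ (s + 2) * d.MM s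
/-- level height -/
def nn (s : ℕ) : ℕ := 2 * d.nu s
/-- target height -/
def kk (s : ℕ) : ℕ := 2 * d.ka s

theorem nu_succ (s : ℕ) : d.nu (s + 1) = d.ka s + 1 := rfl
theorem nn_succ (s : ℕ) : d.nn (s + 1) = d.kk s + 2 := by simp only [nn, kk, nu_succ]; ring
theorem kk_le (s : ℕ) : d.kk s ≤ d.nn s := by unfold kk nn ka; omega
theorem MM_succ (s : ℕ) : d.MM (s + 1) = d.MM s * (16 * d.EE s ^ 2 * (d.nn s + 3)) := rfl
theorem MM_pos (s : ℕ) : 1 ≤ d.MM s := by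
  induction s with
  | zero => simp [MM]
  | succ s ih =>
    have : 0 < d.MM (s + 1) := by unfold MM; positivity
    exact this
theorem EE_ge (s : ℕ) : 16 * 4 ^ s ≤ d.EE s := by
  unfold EE
  calc 16 * 4 ^ s = 4 ^ (s + 2) * 1 := by rw [pow_add]; ring
    _ ≤ _ := Nat.mul_le_mul_left _ (d.MM_pos s)

section gen
variable {K : Type*} [Field K] [LinearOrder K]
/-- orbit under the stage maps -/
def orb : ℕ → K × K → K × K
  | 0, z => z
  | s + 1, z => stG ((d.bnum s : K) / (bden s : K)) (d.EE s : K) (d.nn s : K) (d.kk s : K) (orb s z)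
/-- left boundary -/
def ga : ℕ → K
  | 0 => 0
  | s + 1 => (d.bnum s : K) / (bden s : K)
/-- margin -/
def mu (s i : ℕ) (z : K × K) : K :=
  max (max (max (z.1 - 1) (d.ga s - z.1)) (max (-z.2) (z.2 - (d.nn s + 3))))
    (min (d.nn s - z.2) (d.out s i (DD^[i] z.1)))
end gen

theorem par (s : ℕ) : Par (d.be s) (d.EE s) (d.nn s) (d.kk s) := by
  refine ⟨d.be_lo s, d.be_hi s, ?_, by positivity, by exact_mod_cast d.kk_le s⟩
  have := d.EE_ge s
  have h1 : 1 ≤ 4 ^ s := Nat.one_le_pow _ _ (by norm_num)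
  have : 16 ≤ d.EE s := by omega
  exact_mod_cast this

theorem EE_inv (s : ℕ) : 1 / (d.EE s : ℝ) ≤ 1 / (8 * 4 ^ s) := by
  apply one_div_le_one_div_of_le (by positivity)
  have : 8 * 4 ^ s ≤ d.EE s := by have := d.EE_ge s; omega
  exact_mod_cast this

theorem orb_succ (s : ℕ) (z : ℝ × ℝ) :
    d.orb (s + 1) z = stG (d.be s) (d.EE s) (d.nn s) (d.kk s) (d.orb s z) := rfl
theorem ga_succ (s : ℕ) : (d.ga (s + 1) : ℝ) = d.be s := rfl
theorem ga_zero : (d.ga 0 : ℝ) = 0 := rfl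

theorem orb_cast (s : ℕ) (z : ℚ × ℚ) :
    (((d.orb s z).1 : ℝ), ((d.orb s z).2 : ℝ)) = d.orb s ((z.1 : ℝ), (z.2 : ℝ)) := by
  induction s with
  | zero => rfl
  | succ s ih =>
    rw [orb_succ, ← ih]
    show (((stG _ _ _ _ (d.orb s z)).1 : ℝ), ((stG _ _ _ _ (d.orb s z)).2 : ℝ)) = _
    rw [stG_cast]
    push_cast
    rfl

theorem ga_cast (s : ℕ) : (((d.ga s : ℚ)) : ℝ) = d.ga s := by
  cases s with
  | zero => simp [ga]
  | succ s => simp [ga]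

theorem mu_cast (s i : ℕ) (z : ℚ × ℚ) :
    ((d.mu s i z : ℚ) : ℝ) = d.mu s i ((z.1 : ℝ), (z.2 : ℝ)) := by
  unfold mu
  push_cast
  rw [out_cast, DDi_cast, ga_cast]

theorem orb_Nr (s : ℕ) {e : ℝ} {z z' : ℝ × ℝ} (h1 : Nr e z.1 z'.1) (h2 : Nr e z.2 z'.2) :
    Nr (d.MM s * e) (d.orb s z).1 (d.orb s z').1 ∧ Nr (d.MM s * e) (d.orb s z).2 (d.orb s z').2 := by
  induction s with
  | zero => simpa [MM, orb] using ⟨h1, h2⟩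
  | succ s ih =>
    have := (d.par s).stG_Nr ih.1 ih.2
    rw [orb_succ, orb_succ, MM_succ]
    refine ⟨this.1.mono ?_, this.2.mono ?_⟩ <;>
    · push_cast; apply le_of_eq; ring

theorem mu_Nr (s i : ℕ) {e : ℝ} {z z' : ℝ × ℝ} (h1 : Nr e z.1 z'.1) (h2 : Nr e z.2 z'.2) :
    Nr (4 ^ i * e) (d.mu s i z) (d.mu s i z') := by
  have he := h1.nonneg
  have h4 : e ≤ 4 ^ i * e := by
    have : (1 : ℝ) ≤ 4 ^ i := one_le_pow₀ (by norm_num)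
    nlinarith
  have a1 : ∀ c, Nr (4 ^ i * e) (z.1 - c) (z'.1 - c) := fun c =>
    (h1.sub (Nr.zero c)).mono (by linarith)
  have a2 : ∀ c, Nr (4 ^ i * e) (c - z.1) (c - z'.1) := fun c =>
    ((Nr.zero c).sub h1).mono (by linarith)
  have b1 : ∀ c, Nr (4 ^ i * e) (z.2 - c) (z'.2 - c) := fun c =>
    (h2.sub (Nr.zero c)).mono (by linarith)
  have b2 : ∀ c, Nr (4 ^ i * e) (c - z.2) (c - z'.2) := fun c =>
    ((Nr.zero c).sub h2).mono (by linarith)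
  exact (((a1 _).max' (a2 _)).max' (((h2.neg).mono h4).max' (b1 _))).max'
    ((b2 _).min' (d.out_Nr s i (DDi_Nr i h1)))

theorem orb_cont (s : ℕ) : Continuous (d.orb s : ℝ × ℝ → ℝ × ℝ) := by
  induction s with
  | zero => exact continuous_id
  | succ s ih =>
    show Continuous fun z => stG _ _ _ _ (d.orb s z)
    have : Continuous (stG (d.be s) (d.EE s : ℝ) (d.nn s) (d.kk s)) := by
      unfold stG stX stS theta stX gg
      fun_prop
    exact this.comp ih

/-- stage region -/
def TT (s : ℕ) : Set (ℝ × ℝ) :=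
  {z | d.ga s ≤ z.1 ∧ z.1 ≤ 1 ∧ 0 ≤ z.2 ∧ z.2 ≤ d.nn s + 3 ∧ ((d.nn s : ℝ) ≤ z.2 ∨ z.1 ∈ d.PS s)}

theorem mem_TT_iff (s : ℕ) (z : ℝ × ℝ) : z ∈ d.TT s ↔ ∀ i, d.mu s i z ≤ 0 := by
  simp only [mu, max_le_iff, min_le_iff]
  constructor
  · rintro ⟨h1, h2, h3, h4, h5⟩ i
    refine ⟨⟨⟨by linarith, by linarith⟩, by linarith, by linarith⟩, ?_⟩
    rcases h5 with h5 | h5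
    · left; linarith
    · right
      by_cases hi : i < s
      · exact h5 i hi
      · unfold out; rw [if_neg hi]; norm_num
  · intro h
    obtain ⟨⟨⟨h1, h2⟩, h3, h4⟩, -⟩ := h 0
    refine ⟨by linarith, by linarith, by linarith, by linarith, ?_⟩
    by_cases hn : (d.nn s : ℝ) ≤ z.2
    · exact Or.inl hn
    · right
      intro i hi
      rcases (h i).2 with h5 | h5
      · exact absurd (by linarith) hn
      · exact h5

/-- the fan -/
def QQ : Set (ℝ × ℝ) := {z | ∀ s, d.orb s z ∈ d.TT s}

theorem mu_cont (s i : ℕ) : Continuous (d.mu s i : ℝ × ℝ → ℝ) := by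
  have h1 : Continuous (d.out s i : ℝ → ℝ) := by unfold out; split_ifs <;> fun_prop
  have h2 : Continuous fun z : ℝ × ℝ => d.out s i (DD^[i] z.1) :=
    h1.comp ((DDi_cont i).comp continuous_fst)
  unfold mu
  fun_prop

theorem QQ_compact : IsCompact d.QQ := by
  have hcl : IsClosed d.QQ := by
    have : d.QQ = ⋂ s, ⋂ i, {z | d.mu s i (d.orb s z) ≤ 0} := by
      ext z; simp only [QQ, mem_TT_iff, mem_iInter, mem_setOf_eq]
    rw [this]
    exact isClosed_iInter fun s => isClosed_iInter fun i =>
      isClosed_le ((d.mu_cont s i).comp (d.orb_cont s)) continuous_const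
  refine (isCompact_Icc (a := ((0 : ℝ), (0 : ℝ))) (b := (1, 3))).of_isClosed_subset hcl ?_
  intro z hz
  obtain ⟨h1, h2, h3, h4, -⟩ := hz 0
  simp only [orb, ga_zero, nn, nu] at h1 h2 h3 h4
  norm_num at h4
  exact ⟨⟨h1, h3⟩, h2, h4⟩

theorem ga_le (s : ℕ) : d.ga s ≤ d.be s - 1 / (8 * 4 ^ s) := by
  cases s with
  | zero => rw [ga_zero]; have := d.be_lo 0; norm_num at *; linarith
  | succ s =>
    rw [ga_succ]
    refine d.P_lower (Nat.lt_succ_self s) (d.P_mem le_rfl ?_)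
    have : (0 : ℝ) < 1 / (8 * 4 ^ (s + 1)) := by positivity
    linarith

/-- inverse stage -/
noncomputable def JJ (s : ℕ) (w : ℝ × ℝ) : ℝ × ℝ :=
  stJ (d.be s) (d.EE s) (d.nn s) (d.kk s) w

theorem JJ_maps {s : ℕ} {w : ℝ × ℝ} (hw : w ∈ d.TT (s + 1)) : d.JJ s w ∈ d.TT s ∧
    stG (d.be s) (d.EE s) (d.nn s) (d.kk s) (d.JJ s w) = w := by
  obtain ⟨u, t⟩ := w
  obtain ⟨h1, h2, h3, h4, h5⟩ := hw
  simp only [ga_succ, nn_succ] at h1 h2 h3 h4 h5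
  push_cast at h4 h5
  obtain ⟨j1, j2, j3, j4, j5, j6⟩ := (d.par s).J_desc h1 h2 h3 (by linarith)
  refine ⟨⟨?_, j4, j2, j3, ?_⟩, j1⟩
  · exact (d.ga_le s).trans (le_trans (by linarith [d.EE_inv s]) j5)
  · rcases j6 with ⟨a, b⟩ | a | a
    · right
      rcases h5 with h5 | h5
      · linarith
      · show (d.JJ s (u, t)).1 ∈ _
        unfold JJ
        rw [b]; exact d.PS_anti (Nat.le_succ s) h5
    · left; exact a
    · right; exact d.P_mem (le_trans (by linarith [d.EE_inv s]) j5) a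

theorem exists_pre (s : ℕ) : ∀ w ∈ d.TT s, ∃ z, d.orb s z = w ∧ ∀ r ≤ s, d.orb r z ∈ d.TT r := by
  induction s with
  | zero =>
    intro w hw
    refine ⟨w, rfl, fun r hr => ?_⟩
    obtain rfl : r = 0 := by omega
    exact hw
  | succ s ih =>
    intro w hw
    obtain ⟨h1, h2⟩ := d.JJ_maps hw
    obtain ⟨z, hz, hr⟩ := ih _ h1
    have h3 : d.orb (s + 1) z = w := by rw [orb_succ, hz, h2]
    refine ⟨z, h3, fun r hrs => ?_⟩
    rcases Nat.lt_or_ge r (s + 1) with h | h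
    · exact hr r (by omega)
    · obtain rfl : r = s + 1 := by omega
      rw [h3]; exact hw

variable {d}
theorem QQ_back {z z' : ℝ × ℝ} (hz : z ∈ d.QQ) (hz' : z' ∈ d.QQ) (s : ℕ) {e : ℝ}
    (h1 : Nr e (d.orb s z).1 (d.orb s z').1) (h2 : Nr e (d.orb s z).2 (d.orb s z').2) :
    Nr (d.MM s * e) z.1 z'.1 ∧ Nr (d.MM s * e) z.2 z'.2 := by
  induction s generalizing e with
  | zero => simpa [MM, orb] using ⟨h1, h2⟩
  | succ s ih =>
    have g := (d.par s).stJ_Nr h1 h2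
    have e1 := (d.par s).J_G (hz s).2.2.1 (hz (s + 1)).1
    have e2 := (d.par s).J_G (hz' s).2.2.1 (hz' (s + 1)).1
    rw [orb_succ, orb_succ, e1, e2] at g
    have := ih g.1 g.2
    rw [MM_succ]
    refine ⟨this.1.mono ?_, this.2.mono ?_⟩ <;>
    · push_cast; apply le_of_eq; ring

theorem QQ_stab {z : ℝ × ℝ} (hz : z ∈ d.QQ) (s : ℕ) :
    ((d.orb s z).2 < d.kk s ∧ d.orb (s + 1) z = d.orb s z) ∨
    ((d.kk s : ℝ) ≤ (d.orb s z).2 ∧ (d.kk s : ℝ) ≤ (d.orb (s + 1) z).2) := by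
  refine (d.par s).stable (hz s).2.2.1 (hz (s + 1)).1 ?_
  have := (hz (s + 1)).2.2.2.1
  rw [nn_succ] at this
  push_cast at this
  rw [orb_succ] at this
  linarith

theorem QQ_lo {z : ℝ × ℝ} (hz : z ∈ d.QQ) {s s' : ℕ} (hs : s ≤ s') {c : ℝ}
    (hc : ∀ r, s ≤ r → r < s' → c ≤ d.kk r) (h : (d.orb s z).2 < c) : d.orb s' z = d.orb s z := by
  induction s', hs using Nat.le_induction with
  | base => rfl
  | succ r hr ih =>
    have ih := ih fun q h1 h2 => hc q h1 (by omega)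
    have hk := hc r hr (by omega)
    rcases QQ_stab hz r with ⟨_, h2⟩ | ⟨h1, _⟩
    · rw [h2, ih]
    · rw [ih] at h1; linarith

theorem QQ_hi {z : ℝ × ℝ} (hz : z ∈ d.QQ) {s s' : ℕ} (hs : s ≤ s') {c : ℝ}
    (hc : ∀ r, s ≤ r → r < s' → c ≤ d.kk r) (h : c ≤ (d.orb s z).2) : c ≤ (d.orb s' z).2 := by
  induction s', hs using Nat.le_induction with
  | base => exact h
  | succ r hr ih =>
    have ih := ih fun q h1 h2 => hc q h1 (by omega)
    have hk := hc r hr (by omega)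
    rcases QQ_stab hz r with ⟨_, h2⟩ | ⟨_, h1⟩
    · rw [h2]; exact ih
    · linarith

theorem QQ_box {z : ℝ × ℝ} (hz : z ∈ d.QQ) (s : ℕ) (h : (d.kk s : ℝ) + 2 ≤ (d.orb (s + 1) z).2) :
    d.be s - 1 / d.EE s ≤ (d.orb s z).1 ∧ (d.orb s z).1 ≤ d.be s ∧
    d.kk s + 1 - 3 / d.EE s ≤ (d.orb s z).2 ∧ (d.orb s z).2 ≤ d.kk s + 1 + 2 / d.EE s := by
  refine (d.par s).box (hz s).2.2.1 (hz (s + 1)).1 (hz (s + 1)).2.1 h ?_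
  have := (hz (s + 1)).2.2.2.1
  rw [nn_succ] at this
  push_cast at this
  rw [orb_succ] at this
  linarith

variable (d)
theorem ka_tends (j : ℕ) : ∃ s, ∀ r, s ≤ r → j ≤ d.ka r := by
  induction j with
  | zero => exact ⟨0, fun _ _ => Nat.zero_le _⟩
  | succ j ih =>
    obtain ⟨s, hs⟩ := ih
    have key : ∃ s', ∀ r, s' ≤ r → d.f r ≠ j := by
      by_cases h : ∃ r, d.f r = j
      · obtain ⟨r0, h0⟩ := h
        refine ⟨r0 + 1, fun r hr h => ?_⟩
        have := d.f_inj (h.trans h0.symm)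
        omega
      · push Not at h
        exact ⟨0, fun r _ => h r⟩
    obtain ⟨s', hs'⟩ := key
    refine ⟨max (s + 1) s', fun r hr => ?_⟩
    have h1 := hs r (by omega)
    have h2 := hs' r (by omega)
    obtain ⟨q, rfl⟩ : ∃ q, r = q + 1 := ⟨r - 1, by omega⟩
    have h3 := hs q (by omega)
    unfold ka at h1 ⊢
    rw [nu_succ] at *
    omega

theorem true_stage (m : ℕ) : ∃ s, m ≤ s ∧ ∀ r, s < r → d.ka s < d.ka r := by
  by_contra hc
  push Not at hc
  have : ∀ N, ∃ r, N ≤ r ∧ m ≤ r ∧ d.ka r ≤ d.ka m := by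
    intro N
    induction N with
    | zero => exact ⟨m, by omega, le_rfl, le_rfl⟩
    | succ N ih =>
      obtain ⟨r, h1, h2, h3⟩ := ih
      obtain ⟨r', h4, h5⟩ := hc r h2
      exact ⟨r', by omega, by omega, by omega⟩
  obtain ⟨s, hs⟩ := d.ka_tends (d.ka m + 1)
  obtain ⟨r, h1, h2, h3⟩ := this s
  have := hs r h1
  omega

theorem kk_tends (c : ℝ) : ∃ s, ∀ r, s ≤ r → c ≤ d.kk r := by
  obtain ⟨j, hj⟩ := exists_nat_ge c
  obtain ⟨s, hs⟩ := d.ka_tends j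
  refine ⟨s, fun r hr => hj.trans ?_⟩
  have := hs r hr
  have : j ≤ d.kk r := by unfold kk; omega
  exact_mod_cast this

end Dat
end CF

end PartE

section PartF

open Set Metric Filter Topology

namespace CF
namespace Dat
variable (d : Dat)

/-- the orbit is eventually constant from stage s on -/
def Cst (z : ℝ × ℝ) (s : ℕ) : Prop := ∀ r, s ≤ r → d.orb r z = d.orb s z

open Classical in
/-- the fan map on the final position -/
noncomputable def ph (w : ℝ × ℝ) : ℝ × ℝ :=
  (1 / (1 + w.2) * d.Th w.1 + (1 - 1 / (1 + w.2)) * (1 / 2), 1 / (1 + w.2))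

open Classical in
/-- the homeomorphism to the fan -/
noncomputable def FF (z : ℝ × ℝ) : ℝ × ℝ :=
  if h : ∃ s, d.Cst z s then d.ph (d.orb h.choose z) else (1 / 2, 0)

variable {d}
theorem FF_of {z : ℝ × ℝ} {s : ℕ} (h : d.Cst z s) : d.FF z = d.ph (d.orb s z) := by
  have hex : ∃ s, d.Cst z s := ⟨s, h⟩
  unfold FF
  rw [dif_pos hex]
  congr 1
  have h1 := hex.choose_spec (max s hex.choose) (le_max_right _ _)
  have h2 := h (max s hex.choose) (le_max_left _ _)
  rw [← h1, h2]

theorem FF_not {z : ℝ × ℝ} (h : ¬ ∃ s, d.Cst z s) : d.FF z = (1 / 2, 0) := by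
  unfold FF
  rw [dif_neg h]

theorem Cst.mono {z : ℝ × ℝ} {s s' : ℕ} (h : d.Cst z s) (hs : s ≤ s') : d.Cst z s' := by
  intro r hr
  rw [h r (hs.trans hr), h s' hs]

theorem Cst_of {z : ℝ × ℝ} (hz : z ∈ d.QQ) {s : ℕ} {c : ℝ} (hc : ∀ r, s ≤ r → c ≤ d.kk r)
    (h : (d.orb s z).2 < c) : d.Cst z s :=
  fun _ hr => QQ_lo hz hr (fun q hq _ => hc q hq) h

theorem nCst {z : ℝ × ℝ} (hz : z ∈ d.QQ) (hA : ¬ ∃ s, d.Cst z s) {s : ℕ} {c : ℝ}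
    (hc : ∀ r, s ≤ r → c ≤ d.kk r) : c ≤ (d.orb s z).2 := by
  by_contra h
  exact hA ⟨s, Cst_of hz hc (not_le.1 h)⟩

theorem Cst_PP {z : ℝ × ℝ} (hz : z ∈ d.QQ) {s : ℕ} (h : d.Cst z s) : (d.orb s z).1 ∈ d.PP := by
  intro q
  obtain ⟨s', hs'⟩ := d.kk_tends ((d.orb s z).2 + 1)
  obtain ⟨r, hr⟩ : ∃ r, r = max (max s s') q := ⟨_, rfl⟩
  have h1 := (hz r).2.2.2.2
  rw [h r (by omega)] at h1
  rcases h1 with h1 | h1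
  · have := hs' r (by omega)
    have h2 : (d.kk r : ℝ) ≤ d.nn r := by exact_mod_cast d.kk_le r
    linarith
  · exact d.PS_anti (by omega) h1

theorem ph_cont : ContinuousOn d.ph {w | w.1 ∈ d.PP ∧ 0 ≤ w.2} := by
  have h1 : ContinuousOn (fun w : ℝ × ℝ => 1 / (1 + w.2)) {w | w.1 ∈ d.PP ∧ 0 ≤ w.2} := by
    refine continuousOn_const.div (by fun_prop) ?_
    rintro w ⟨_, h⟩
    positivity
  have h2 : ContinuousOn (fun w : ℝ × ℝ => d.Th w.1) {w | w.1 ∈ d.PP ∧ 0 ≤ w.2} :=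
    d.Th_cont.comp continuous_fst.continuousOn fun w hw => hw.1
  unfold ph
  exact ((h1.mul h2).add ((continuousOn_const.sub h1).mul continuousOn_const)).prodMk h1

theorem ph_near {w : ℝ × ℝ} {c : ℝ} (hc : 0 ≤ c) (h : c ≤ w.2) :
    dist (d.ph w) (1 / 2, 0) ≤ 1 / (1 + c) := by
  have h1 : 1 / (1 + w.2) ≤ 1 / (1 + c) := one_div_le_one_div_of_le (by linarith) (by linarith)
  have h0 : 0 < 1 / (1 + w.2) := one_div_pos.2 (by linarith)
  have hT := d.Th_bd w.1
  unfold ph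
  rw [Prod.dist_eq, max_le_iff, Real.dist_eq, Real.dist_eq, abs_le, abs_le]
  simp only
  refine ⟨⟨?_, ?_⟩, ?_, ?_⟩
  · nlinarith
  · nlinarith
  · linarith
  · linarith

theorem FF_cont : ContinuousOn d.FF d.QQ := by
  intro z hz
  by_cases hA : ∃ s, d.Cst z s
  · obtain ⟨s, hs⟩ := hA
    obtain ⟨s', hs'⟩ := d.kk_tends ((d.orb s z).2 + 1)
    obtain ⟨m, hm⟩ : ∃ m, m = max s s' := ⟨_, rfl⟩
    have hzm : d.orb m z = d.orb s z := hs m (by omega)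
    have hev : ∀ᶠ y in 𝓝[d.QQ] z, d.Cst y m := by
      have h1 : ContinuousAt (fun y => (d.orb m y).2) z :=
        (continuous_snd.comp (d.orb_cont m)).continuousAt
      have h2 : ∀ᶠ y in 𝓝 z, (d.orb m y).2 < (d.orb s z).2 + 1 :=
        h1.eventually_lt_const (by simp only [hzm]; linarith)
      filter_upwards [mem_nhdsWithin_of_mem_nhds h2, self_mem_nhdsWithin] with y hy hyQ
      exact Cst_of hyQ (fun r hr => hs' r (by omega)) hy
    have hco : ContinuousWithinAt (fun y => d.ph (d.orb m y)) (d.QQ ∩ {y | d.Cst y m}) z := by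
      have h1 : ContinuousWithinAt d.ph {w | w.1 ∈ d.PP ∧ 0 ≤ w.2} (d.orb m z) :=
        ph_cont _ ⟨Cst_PP hz (hs.mono (by omega)), (hz m).2.2.1⟩
      refine h1.comp (d.orb_cont m).continuousWithinAt ?_
      rintro y ⟨hy, hy'⟩
      exact ⟨Cst_PP hy hy', (hy m).2.2.1⟩
    have hFc : ContinuousWithinAt d.FF (d.QQ ∩ {y | d.Cst y m}) z :=
      hco.congr (fun y hy => FF_of hy.2) (FF_of (hs.mono (by omega)))
    refine hFc.mono_of_mem_nhdsWithin ?_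
    exact inter_mem self_mem_nhdsWithin hev
  · rw [ContinuousWithinAt, FF_not hA, Metric.tendsto_nhds]
    intro ε hε
    obtain ⟨j, hj⟩ := exists_nat_one_div_lt hε
    obtain ⟨s, hs⟩ := d.kk_tends ((j : ℝ) + 1)
    have hzs := nCst hz hA hs
    have h1 : ContinuousAt (fun y => (d.orb s y).2) z :=
      (continuous_snd.comp (d.orb_cont s)).continuousAt
    have h2 : ∀ᶠ y in 𝓝 z, (j : ℝ) < (d.orb s y).2 :=
      h1.eventually_const_lt (by linarith)
    filter_upwards [mem_nhdsWithin_of_mem_nhds h2, self_mem_nhdsWithin] with y hy hyQ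
    by_cases hB : ∃ q, d.Cst y q
    · obtain ⟨q, hq⟩ := hB
      rw [FF_of (hq.mono (le_max_right s q))]
      have h3 : (j : ℝ) ≤ (d.orb (max s q) y).2 :=
        QQ_hi hyQ (le_max_left s q) (fun r hr _ => by linarith [hs r hr]) hy.le
      refine (ph_near (by positivity) h3).trans_lt ?_
      rw [add_comm]; exact hj
    · rw [FF_not hB, dist_self]; exact hε

theorem QQ_eq {z z' : ℝ × ℝ} (hz : z ∈ d.QQ) (hz' : z' ∈ d.QQ) {s : ℕ}
    (h : d.orb s z = d.orb s z') : z = z' := by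
  have := QQ_back hz hz' s (e := 0) (by rw [h]; exact Nr.zero _) (by rw [h]; exact Nr.zero _)
  simp only [Nr, mul_zero] at this
  have h1 := abs_eq_zero.1 (le_antisymm this.1 (abs_nonneg _))
  have h2 := abs_eq_zero.1 (le_antisymm this.2 (abs_nonneg _))
  exact Prod.ext (by linarith) (by linarith)

theorem QQ_apex {z z' : ℝ × ℝ} (hz : z ∈ d.QQ) (hz' : z' ∈ d.QQ) (hA : ¬ ∃ s, d.Cst z s)
    (hA' : ¬ ∃ s, d.Cst z' s) : z = z' := by
  have key : ∀ m : ℕ, Nr (1 / 4 ^ m) z.1 z'.1 ∧ Nr (1 / 4 ^ m) z.2 z'.2 := by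
    intro m
    obtain ⟨s, hs, hr⟩ := d.true_stage m
    have hc : ∀ r, s + 1 ≤ r → (d.kk s : ℝ) + 2 ≤ d.kk r := by
      intro r h
      have := hr r (by omega)
      have : d.kk s + 2 ≤ d.kk r := by unfold kk; omega
      exact_mod_cast this
    obtain ⟨a1, a2, a3, a4⟩ := QQ_box hz s (nCst hz hA hc)
    obtain ⟨b1, b2, b3, b4⟩ := QQ_box hz' s (nCst hz' hA' hc)
    have hE : (0 : ℝ) < d.EE s := (d.par s).E_pos
    have e1 : 1 / (d.EE s : ℝ) ≤ 5 / d.EE s := by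
      apply div_le_div_of_nonneg_right (by norm_num) hE.le
    have e2 : 5 / (d.EE s : ℝ) = 3 / d.EE s + 2 / d.EE s := by ring
    have hb := QQ_back hz hz' s (e := 5 / d.EE s)
      (by unfold Nr; rw [abs_le]; constructor <;> linarith)
      (by unfold Nr; rw [abs_le]; constructor <;> linarith)
    have hle : (d.MM s : ℝ) * (5 / d.EE s) ≤ 1 / 4 ^ m := by
      have hM : (0 : ℝ) < d.MM s := by exact_mod_cast d.MM_pos s
      have : (d.MM s : ℝ) * (5 / d.EE s) = 5 / 16 * (1 / 4 ^ s) := by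
        unfold EE; push_cast; rw [pow_add]; field_simp; norm_num
      rw [this]
      have h1 : (1 : ℝ) / 4 ^ s ≤ 1 / 4 ^ m :=
        one_div_le_one_div_of_le (by positivity) (pow_le_pow_right₀ (by norm_num) hs)
      have h2 : (0 : ℝ) < 1 / 4 ^ s := by positivity
      linarith
    exact ⟨hb.1.mono hle, hb.2.mono hle⟩
  have fin : ∀ a b : ℝ, (∀ m : ℕ, Nr (1 / 4 ^ m) a b) → a = b := by
    intro a b h
    by_contra hne
    have hpos : 0 < |a - b| := abs_pos.2 (sub_ne_zero.2 hne)
    obtain ⟨n, hn⟩ := pow_unbounded_of_one_lt (1 / |a - b|) (by norm_num : (1 : ℝ) < 4)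
    have := h n
    unfold Nr at this
    rw [div_lt_iff₀ hpos] at hn
    rw [le_div_iff₀ (by positivity)] at this
    linarith
  exact Prod.ext (fin _ _ fun m => (key m).1) (fin _ _ fun m => (key m).2)

theorem FF_inj : InjOn d.FF d.QQ := by
  intro z hz z' hz' h
  by_cases hA : ∃ s, d.Cst z s <;> by_cases hA' : ∃ s, d.Cst z' s
  · obtain ⟨s, hs⟩ := hA
    obtain ⟨s', hs'⟩ := hA'
    have g := hs.mono (le_max_left s s')
    have g' := hs'.mono (le_max_right s s')
    rw [FF_of g, FF_of g'] at h
    refine QQ_eq hz hz' (s := max s s') ?_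
    have p0 := (hz (max s s')).2.2.1
    have p1 := (hz' (max s s')).2.2.1
    have q0 := Cst_PP hz g
    have q1 := Cst_PP hz' g'
    generalize d.orb (max s s') z = w at *
    generalize d.orb (max s s') z' = w' at *
    unfold ph at h
    obtain ⟨h1, h2⟩ := Prod.ext_iff.1 h
    simp only at h1 h2
    have ht : w.2 = w'.2 := by
      rw [one_div, one_div] at h2
      have := inv_injective h2
      linarith
    rw [ht] at h1
    have hp : 0 < 1 / (1 + w'.2) := by positivity
    have hT : d.Th w.1 = d.Th w'.1 := by
      have : 1 / (1 + w'.2) * d.Th w.1 = 1 / (1 + w'.2) * d.Th w'.1 := by linarith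
      exact mul_left_cancel₀ hp.ne' this
    exact Prod.ext (d.Th_inj q0 q1 hT) ht
  · obtain ⟨s, hs⟩ := hA
    rw [FF_of hs, FF_not hA'] at h
    have h2 := (Prod.ext_iff.1 h).2
    have p0 := (hz s).2.2.1
    have hp : 0 < 1 / (1 + (d.orb s z).2) := by positivity
    simp only [ph] at h2
    linarith
  · obtain ⟨s, hs⟩ := hA'
    rw [FF_of hs, FF_not hA] at h
    have h2 := (Prod.ext_iff.1 h).2
    have p0 := (hz' s).2.2.1
    have hp : 0 < 1 / (1 + (d.orb s z').2) := by positivity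
    simp only [ph] at h2
    linarith
  · exact QQ_apex hz hz' hA hA'

theorem PP_bd {x : ℝ} (hx : x ∈ d.PP) : 1 / 4 ≤ x ∧ x ≤ 1 := by
  rcases d.PP_cases hx 0 with ⟨a, b, _⟩ | ⟨a, b, _⟩ <;>
    simp only [Function.iterate_zero, id] at a b <;> constructor <;> linarith

theorem exists_fin {x t : ℝ} (hx : x ∈ d.PP) (ht : 0 ≤ t) :
    ∃ z ∈ d.QQ, d.FF z = d.ph (x, t) := by
  obtain ⟨s, hs⟩ := d.kk_tends t
  have hT : ∀ r, s ≤ r → (x, t) ∈ d.TT r := by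
    intro r hr
    have h1 := hs r hr
    have h2 : (d.kk r : ℝ) ≤ d.nn r := by exact_mod_cast d.kk_le r
    refine ⟨?_, (PP_bd hx).2, ht, by simp only; linarith, Or.inr (hx r)⟩
    cases r with
    | zero => rw [ga_zero]; have := (PP_bd hx).1; simp only; linarith
    | succ r => rw [ga_succ]; exact d.P_lower (Nat.lt_succ_self r) (hx _)
  obtain ⟨z, hz, hzr⟩ := d.exists_pre s (x, t) (hT s le_rfl)
  have hfix : ∀ r, s ≤ r → d.orb r z = (x, t) := by
    intro r hr
    induction r, hr using Nat.le_induction with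
    | base => exact hz
    | succ r hr ih =>
      rw [orb_succ, ih]
      exact (d.par r).G_fix (d.P_lower (Nat.lt_succ_self r) (hx _)) ht (hs r hr)
  refine ⟨z, ?_, ?_⟩
  · intro r
    rcases Nat.le_total r s with h | h
    · exact hzr r h
    · rw [hfix r h]; exact hT r h
  · rw [FF_of (s := s) (fun r hr => by rw [hfix r hr, hz]), hz]

theorem FF_apex : ((1 / 2, 0) : ℝ × ℝ) ∈ d.FF '' d.QQ := by
  obtain ⟨x, hx⟩ := d.PP_nonempty
  have hcl : IsClosed (d.FF '' d.QQ) := (d.QQ_compact.image_of_continuousOn FF_cont).isClosed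
  have hlim : Tendsto (fun n : ℕ => d.ph (x, (n : ℝ))) atTop (𝓝 (1 / 2, 0)) := by
    rw [tendsto_iff_dist_tendsto_zero]
    refine squeeze_zero (fun _ => dist_nonneg)
      (fun n => ph_near (w := (x, (n : ℝ))) (c := n) (by positivity) le_rfl) ?_
    have := tendsto_one_div_add_atTop_nhds_zero_nat (𝕜 := ℝ)
    simpa [add_comm] using this
  refine hcl.mem_of_tendsto hlim (Eventually.of_forall fun n => ?_)
  obtain ⟨z, hz, h⟩ := exists_fin hx (Nat.cast_nonneg (α := ℝ) n)
  exact ⟨z, hz, h⟩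

theorem FF_image : d.FF '' d.QQ = cantorFanSet := by
  ext p
  constructor
  · rintro ⟨z, hz, rfl⟩
    by_cases hA : ∃ s, d.Cst z s
    · obtain ⟨s, hs⟩ := hA
      rw [FF_of hs]
      have p0 := (hz s).2.2.1
      have hp : 0 < 1 / (1 + (d.orb s z).2) := by positivity
      have hp1 : 1 / (1 + (d.orb s z).2) ≤ 1 := by
        rw [div_le_one (by positivity)]; linarith
      refine ⟨_, d.Th_mem (d.orb s z).1, 1 - 1 / (1 + (d.orb s z).2),
        ⟨by linarith, by linarith⟩, ?_⟩
      ext <;> simp [ph]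
    · rw [FF_not hA]
      obtain ⟨x, hx⟩ := d.PP_nonempty
      exact ⟨_, d.Th_mem x, 1, by simp, by simp⟩
  · rintro ⟨c, hc, t, ⟨h0, h1⟩, rfl⟩
    rcases eq_or_lt_of_le h1 with rfl | h1
    · have := FF_apex (d := d)
      simpa using this
    · obtain ⟨x, hx, rfl⟩ := d.Th_surj hc
      obtain ⟨z, hz, h⟩ := exists_fin hx (t := 1 / (1 - t) - 1) (by
        have : 1 ≤ 1 / (1 - t) := by rw [le_div_iff₀ (by linarith)]; linarith
        linarith)
      refine ⟨z, hz, ?_⟩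
      rw [h]
      ext <;> simp [ph]

theorem QQ_homeo : Nonempty (↥d.QQ ≃ₜ ↥cantorFanSet) := by
  have hb : BijOn d.FF d.QQ cantorFanSet := ⟨by
    intro z hz; rw [← FF_image (d := d)]; exact mem_image_of_mem _ hz, FF_inj, by
    rw [← FF_image (d := d)]; exact surjOn_image _ _⟩
  have : CompactSpace ↥d.QQ := isCompact_iff_compactSpace.1 d.QQ_compact
  have hc : Continuous (hb.equiv d.FF) := by
    refine Continuous.subtype_mk ?_ _
    exact continuousOn_iff_continuous_domRestrict.1 FF_cont
  exact ⟨hc.homeoOfEquivCompactToT2⟩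

theorem QQ_nonempty : d.QQ.Nonempty := by
  obtain ⟨x, hx⟩ := d.PP_nonempty
  obtain ⟨z, hz, _⟩ := exists_fin hx (le_refl (0 : ℝ))
  exact ⟨z, hz⟩

end Dat
end CF

end PartF

section PartG

open Set Metric

namespace CF

theorem rec_c {α σ : Type*} [Primcodable α] [Primcodable σ] {F : α → ℕ → σ} {g : α → σ}
    {h : α × (ℕ × σ) → σ} (hg : Computable g) (hh : Computable h) (h0 : ∀ a, F a 0 = g a)
    (hs : ∀ a n, F a (n + 1) = h (a, (n, F a n))) : Computable fun p : α × ℕ => F p.1 p.2 := by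
  have h1 : Computable fun p : α × ℕ =>
      (Nat.rec (g p.1) (fun y IH => h (p.1, (y, IH))) p.2 : σ) :=
    Computable.nat_rec (f := fun p : α × ℕ => p.2) (g := fun p : α × ℕ => g p.1)
      (h := fun (p : α × ℕ) (q : ℕ × σ) => h (p.1, q)) Computable.snd (hg.comp Computable.fst)
      (hh.comp ((Computable.fst.comp Computable.fst).pair Computable.snd))
  refine h1.of_eq ?_
  rintro ⟨a, n⟩
  simp only
  induction n with
  | zero => exact (h0 a).symm
  | succ n ih => rw [hs, ← ih]

theorem rec_c0 {σ : Type*} [Primcodable σ] {F : ℕ → σ}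
    {h : ℕ × σ → σ} (hh : Computable h)
    (hs : ∀ n, F (n + 1) = h (n, F n)) : Computable F := by
  have := rec_c (α := Unit) (F := fun _ n => F n) (g := fun _ => F 0) (h := fun p => h p.2)
    (Computable.const _) (hh.comp Computable.snd) (fun _ => rfl) (fun _ n => hs n)
  exact this.comp ((Computable.const ()).pair Computable.id)

section
variable {α : Type*} [Primcodable α]
theorem q_divn {f : α → ℚ} {g : α → ℕ} (hf : Computable f) (hg : Computable g) :
    Computable fun a => f a / (g a : ℚ) :=
  (q_mul hf (q_inv hg)).of_eq fun a => (div_eq_mul_inv _ _).symm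

theorem pow4_c {f : α → ℕ} (hf : Computable f) : Computable fun a => 4 ^ f a := by
  have : Computable fun n : ℕ => 4 ^ n :=
    rec_c0 (h := fun p => 4 * p.2) (n_mul (Computable.const 4) Computable.snd)
      (fun n => by rw [pow_succ, mul_comm])
  exact this.comp hf

theorem DD_c {f : α → ℚ} (hf : Computable f) : Computable fun a => DD (f a) := by
  have h4 := q_mul (Computable.const (4 : ℚ)) hf
  exact q_max (q_min (q_sub h4 (Computable.const 1)) (q_sub (Computable.const 3) h4))
    (q_sub h4 (Computable.const 3))

theorem DDi_c {f : α → ℚ} {g : α → ℕ} (hf : Computable f) (hg : Computable g) :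
    Computable fun a => DD^[g a] (f a) := by
  have h : Computable fun p : ℚ × ℕ => DD^[p.2] p.1 := rec_c (α := ℚ) (F := fun x n => DD^[n] x) (g := fun x => x) (h := fun p => DD p.2.2)
    Computable.id (DD_c (Computable.snd.comp Computable.snd)) (fun _ => rfl)
    (fun a n => Function.iterate_succ_apply' _ _ _)
  exact Computable.comp (f := fun p : ℚ × ℕ => DD^[p.2] p.1) (g := fun a => (f a, g a)) h
    (hf.pair hg)

theorem stG_c {b : α → ℚ} {E n k : α → ℕ} {z : α → ℚ × ℚ} (hb : Computable b) (hE : Computable E)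
    (hn : Computable n) (hk : Computable k) (hz : Computable z) (hkn : ∀ a, k a ≤ n a) :
    Computable fun a => stG (b a) (E a : ℚ) (n a : ℚ) (k a : ℚ) (z a) := by
  have hx := Computable.fst.comp hz
  have ht := Computable.snd.comp hz
  have cE := q_cast hE
  have cn := q_cast hn
  have ck := q_cast hk
  have c0 := Computable.const (α := α) (0 : ℚ)
  have c1 := Computable.const (α := α) (1 : ℚ)
  have c2 := Computable.const (α := α) (2 : ℚ)
  have c16 := Computable.const (α := α) (16 : ℚ)
  have hbx := q_sub hb hx
  have hg : Computable fun a => gg (b a) (E a : ℚ) (z a).1 := q_max hx (q_mul cE hbx)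
  have ht2 := q_sub ht (q_add cn c2)
  have hX : Computable fun a => stX (b a) (E a : ℚ) (n a : ℚ) (z a).1 (z a).2 :=
    q_add hg (q_max ht2 c0)
  have hm := q_min ht2 c0
  have hS : Computable fun a => stS (b a) (E a : ℚ) (n a : ℚ) (z a).1 (z a).2 :=
    q_add (q_divn (q_sub hX hx) hE) (q_max hm (q_min (q_neg hm)
      (q_mul (q_add cn c2) (q_sub (q_mul (q_mul c16 cE) hbx) c1))))
  have hl : Computable fun a => 2 * (n a - k a) + 3 :=
    n_add (n_mul (Computable.const 2) (n_sub hn hk)) (Computable.const 3)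
  have hth : Computable fun a => theta (E a : ℚ) (n a : ℚ) (k a : ℚ)
      (stS (b a) (E a : ℚ) (n a : ℚ) (z a).1 (z a).2) := by
    have := q_max (q_min (q_add (q_add cn c2) hS) (q_add ck (q_divn (q_mul c2
      (q_add hS (q_sub (q_add cn c2) ck))) hl)))
      (q_add (q_add ck c2) (q_mul cE (q_sub hS (q_add (q_sub cn ck) c1))))
    refine this.of_eq fun a => ?_
    have hc : ((2 * (n a - k a) + 3 : ℕ) : ℚ) = 2 * ((n a : ℚ) - (k a : ℚ)) + 3 := by
      push_cast [Nat.cast_sub (hkn a)]; ring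
    rw [hc]
    rfl
  exact hX.pair hth
end

namespace Dat
variable (d : Dat)

theorem nu_c : Computable d.nu :=
  rec_c0 (h := fun p => min (d.f p.1) p.2 + 1)
    (n_add (n_min (d.f_comp.comp Computable.fst) Computable.snd) (Computable.const 1))
    (fun n => rfl)
theorem nn_c : Computable d.nn := n_mul (Computable.const 2) d.nu_c
theorem kk_c : Computable d.kk := n_mul (Computable.const 2) (n_min d.f_comp d.nu_c)
theorem MM_c : Computable d.MM := by
  refine rec_c0 (h := fun p => p.2 * (16 * ((4 ^ (p.1 + 2) * p.2) * (4 ^ (p.1 + 2) * p.2)) *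
    (2 * d.nu p.1 + 3))) ?_ (fun n => by rw [← pow_two]; rfl)
  have h1 : Computable fun p : ℕ × ℕ => 4 ^ (p.1 + 2) * p.2 :=
    n_mul (pow4_c (n_add Computable.fst (Computable.const 2))) Computable.snd
  exact n_mul Computable.snd (n_mul (n_mul (Computable.const 16) (n_mul h1 h1))
    (n_add (n_mul (Computable.const 2) (d.nu_c.comp Computable.fst)) (Computable.const 3)))
theorem EE_c : Computable d.EE :=
  n_mul (pow4_c (n_add Computable.id (Computable.const 2))) d.MM_c

section
variable {α : Type*} [Primcodable α] {s i : α → ℕ}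
theorem q0_c (hs : Computable s) (hi : Computable i) :
    ComputablePred fun a => d.q0 (s a) (i a) = true := by
  have h1 := p_and (p_eq (n_mod hi (Computable.const 2)) (Computable.const 0))
    (p_eq (d.k0_comp.comp hs (n_div hi (Computable.const 2))) (Computable.const true))
  refine h1.of_eq fun a => ?_
  simp [q0]
theorem q1_c (hs : Computable s) (hi : Computable i) :
    ComputablePred fun a => d.q1 (s a) (i a) = true := by
  have h1 := p_and (p_eq (n_mod hi (Computable.const 2)) (Computable.const 0))
    (p_eq (d.k1_comp.comp hs (n_div hi (Computable.const 2))) (Computable.const true))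
  refine h1.of_eq fun a => ?_
  simp [q1]

theorem out_c {v : α → ℚ} (hs : Computable s) (hi : Computable i) (hv : Computable v) :
    Computable fun a => d.out (s a) (i a) (v a) := by
  have a1 : ∀ c : ℚ, Computable fun a => v a - c := fun c => q_sub hv (Computable.const c)
  have a2 : ∀ c : ℚ, Computable fun a => c - v a := fun c => q_sub (Computable.const c) hv
  exact p_ite (p_lt hi hs) (p_ite (d.q0_c hs hi) (q_max (a2 _) (a1 _))
    (p_ite (d.q1_c hs hi) (q_max (a2 _) (a1 _))
      (q_max (q_max (a2 _) (a1 _)) (q_min (a1 _) (a2 _))))) (Computable.const (-1))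
end

theorem bN_c : Computable fun p : ℕ × ℕ => d.bN p.1 p.2 := by
  refine rec_c (g := fun _ => 0) (h := fun p => 4 * p.2.2 + d.yy p.1 p.2.1) (Computable.const 0) ?_
    (fun a => rfl) (fun a n => rfl)
  exact n_add (n_mul (Computable.const 4) (Computable.snd.comp Computable.snd))
    (p_ite (d.q0_c Computable.fst (Computable.fst.comp Computable.snd)) (Computable.const 3)
      (Computable.const 1))

theorem bq_c : Computable fun s => (d.bnum s : ℚ) / (bden s : ℚ) := by
  refine q_divn (q_cast ?_) ?_
  · exact n_add (n_mul (Computable.const 8) (d.bN_c.comp (Computable.id.pair Computable.id)))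
      (Computable.const 1)
  · exact n_mul (Computable.const 8) (pow4_c Computable.id)

theorem ga_c : Computable (d.ga : ℕ → ℚ) :=
  rec_c0 (h := fun p => (d.bnum p.1 : ℚ) / (bden p.1 : ℚ)) (d.bq_c.comp Computable.fst)
    (fun _ => rfl)

section
variable {α : Type*} [Primcodable α] {s i : α → ℕ} {z : α → ℚ × ℚ}
theorem orb_c (hs : Computable s) (hz : Computable z) : Computable fun a => d.orb (s a) (z a) := by
  have h : Computable fun p : (ℚ × ℚ) × ℕ => d.orb p.2 p.1 := by
    refine rec_c (α := ℚ × ℚ) (F := fun z n => d.orb n z) (g := fun z => z)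
      (h := fun p => stG ((d.bnum p.2.1 : ℚ) / (bden p.2.1 : ℚ)) (d.EE p.2.1 : ℚ) (d.nn p.2.1 : ℚ)
      (d.kk p.2.1 : ℚ) p.2.2) Computable.id ?_ (fun _ => rfl) (fun a n => rfl)
    have h1 : Computable fun p : (ℚ × ℚ) × (ℕ × (ℚ × ℚ)) => p.2.1 :=
      Computable.fst.comp Computable.snd
    exact stG_c (d.bq_c.comp h1) (d.EE_c.comp h1) (d.nn_c.comp h1) (d.kk_c.comp h1)
      (Computable.snd.comp Computable.snd) (fun a => d.kk_le _)
  exact Computable.comp (f := fun p : (ℚ × ℚ) × ℕ => d.orb p.2 p.1) (g := fun a => (z a, s a)) h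
    (hz.pair hs)

theorem mu_c (hs : Computable s) (hi : Computable i) (hz : Computable z) :
    Computable fun a => d.mu (s a) (i a) (z a) := by
  have hx := Computable.fst.comp hz
  have ht := Computable.snd.comp hz
  have hn := q_cast (d.nn_c.comp hs)
  exact q_max (q_max (q_max (q_sub hx (Computable.const 1)) (q_sub (d.ga_c.comp hs) hx))
    (q_max (q_neg ht) (q_sub ht (q_add hn (Computable.const 3)))))
    (q_min (q_sub hn ht) (d.out_c hs hi (DDi_c hx hi)))
end

end Dat
end CF

end PartG

section PartH

open Set Metric

namespace CF

theorem pos_iff {g : ℝ × ℝ → ℝ} {gq : ℚ × ℚ → ℚ} {L : ℕ}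
    (hc : ∀ q : ℚ × ℚ, ((gq q : ℚ) : ℝ) = g ((q.1 : ℝ), (q.2 : ℝ)))
    (hL : ∀ (e : ℝ) (z z' : ℝ × ℝ), Nr e z.1 z'.1 → Nr e z.2 z'.2 → Nr (L * e) (g z) (g z'))
    (z : ℝ × ℝ) : 0 < g z ↔ ∃ c : (ℚ × ℚ) × ℚ, z ∈ ballOfCode c ∧ (L : ℚ) * c.2 < gq c.1 := by
  constructor
  · intro h
    have hL1 : (0 : ℝ) < 2 * (L + 1) := by positivity
    obtain ⟨r, hr0, hr1⟩ := exists_rat_btwn (div_pos h hL1)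
    rw [lt_div_iff₀ hL1] at hr1
    obtain ⟨q1, a1, b1⟩ := exists_rat_btwn (show z.1 < z.1 + r by linarith)
    obtain ⟨q2, a2, b2⟩ := exists_rat_btwn (show z.2 < z.2 + r by linarith)
    refine ⟨((q1, q2), r), ?_, ?_⟩
    · show dist z ((q1 : ℝ), (q2 : ℝ)) < r
      rw [Prod.dist_eq, max_lt_iff, Real.dist_eq, Real.dist_eq, abs_lt, abs_lt]
      refine ⟨⟨?_, ?_⟩, ?_, ?_⟩ <;> simp only <;> linarith
    · have h1 := hL r z ((q1 : ℝ), (q2 : ℝ))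
        (by unfold Nr; rw [abs_le]; constructor <;> simp only <;> linarith)
        (by unfold Nr; rw [abs_le]; constructor <;> simp only <;> linarith)
      have h2 := hc (q1, q2)
      unfold Nr at h1
      rw [abs_le] at h1
      have : (L : ℝ) * r < ((gq (q1, q2) : ℚ) : ℝ) := by
        rw [h2]
        nlinarith [h1.2]
      exact_mod_cast this
  · rintro ⟨⟨⟨q1, q2⟩, r⟩, hz, h⟩
    have hz : dist z ((q1 : ℝ), (q2 : ℝ)) < r := hz
    have h' : (L : ℝ) * r < ((gq (q1, q2) : ℚ) : ℝ) := by exact_mod_cast h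
    rw [hc] at h'
    rw [Prod.dist_eq, max_lt_iff, Real.dist_eq, Real.dist_eq] at hz
    have h1 := hL r z ((q1 : ℝ), (q2 : ℝ)) hz.1.le hz.2.le
    unfold Nr at h1
    rw [abs_le] at h1
    linarith [h1.1]

namespace Dat
variable (d : Dat)

theorem mu_pos (s i : ℕ) (z : ℝ × ℝ) : 0 < d.mu s i (d.orb s z) ↔ ∃ c : (ℚ × ℚ) × ℚ,
    z ∈ ballOfCode c ∧ ((d.MM s * 4 ^ i : ℕ) : ℚ) * c.2 < d.mu s i (d.orb s c.1) := by
  refine pos_iff (g := fun z => d.mu s i (d.orb s z)) (gq := fun q => d.mu s i (d.orb s q)) ?_ ?_ z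
  · intro q
    simp only [mu_cast, orb_cast]
  · intro e z z' h1 h2
    obtain ⟨g1, g2⟩ := d.orb_Nr s h1 h2
    refine (d.mu_Nr s i g1 g2).mono ?_
    push_cast; apply le_of_eq; ring

theorem QQ_pi : IsPi01Closed d.QQ := by
  refine ⟨fun c => ∃ p : ℕ × ℕ, ((d.MM p.1 * 4 ^ p.2 : ℕ) : ℚ) * c.2 <
    d.mu p.1 p.2 (d.orb p.1 c.1), ?_, ?_⟩
  · refine re_of_enum (C := fun x : ((ℚ × ℚ) × ℚ) × (ℕ × ℕ) =>
      ((d.MM x.2.1 * 4 ^ x.2.2 : ℕ) : ℚ) * x.1.2 < d.mu x.2.1 x.2.2 (d.orb x.2.1 x.1.1)) ?_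
    have hs : Computable fun x : ((ℚ × ℚ) × ℚ) × (ℕ × ℕ) => x.2.1 :=
      Computable.fst.comp Computable.snd
    have hi : Computable fun x : ((ℚ × ℚ) × ℚ) × (ℕ × ℕ) => x.2.2 :=
      Computable.snd.comp Computable.snd
    have hz : Computable fun x : ((ℚ × ℚ) × ℚ) × (ℕ × ℕ) => x.1.1 :=
      Computable.fst.comp Computable.fst
    have hr : Computable fun x : ((ℚ × ℚ) × ℚ) × (ℕ × ℕ) => x.1.2 :=
      Computable.snd.comp Computable.fst
    exact qp_lt (q_mul (q_cast (n_mul (d.MM_c.comp hs) (pow4_c hi))) hr)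
      (d.mu_c hs hi (d.orb_c hs hz))
  · ext z
    simp only [QQ, mem_TT_iff, mem_setOf_eq, mem_diff, mem_univ, true_and, mem_iUnion, not_exists]
    constructor
    · rintro h c ⟨⟨s, i⟩, hc⟩ hz
      exact absurd (h s i) (not_le.2 ((d.mu_pos s i z).2 ⟨c, hz, hc⟩))
    · intro h s i
      by_contra hc
      obtain ⟨c, hz, hlt⟩ := (d.mu_pos s i z).1 (not_le.1 hc)
      exact h c ⟨(s, i), hlt⟩ hz

theorem lt_pos (s i : ℕ) (z : ℝ × ℝ) : 0 < DD^[i] (d.orb s z).1 - 5 / 8 ↔ ∃ c : (ℚ × ℚ) × ℚ,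
    z ∈ ballOfCode c ∧ ((d.MM s * 4 ^ i : ℕ) : ℚ) * c.2 < DD^[i] (d.orb s c.1).1 - 5 / 8 := by
  refine pos_iff (g := fun z => DD^[i] (d.orb s z).1 - 5 / 8)
    (gq := fun q => DD^[i] (d.orb s q).1 - 5 / 8) ?_ ?_ z
  · intro q
    push_cast
    rw [DDi_cast, ← orb_cast]
  · intro e z z' h1 h2
    obtain ⟨g1, g2⟩ := d.orb_Nr s h1 h2
    refine ((DDi_Nr i g1).sub (Nr.zero _)).mono ?_
    push_cast; apply le_of_eq; ring

theorem lt_neg (s i : ℕ) (z : ℝ × ℝ) : 0 < 5 / 8 - DD^[i] (d.orb s z).1 ↔ ∃ c : (ℚ × ℚ) × ℚ,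
    z ∈ ballOfCode c ∧ ((d.MM s * 4 ^ i : ℕ) : ℚ) * c.2 < 5 / 8 - DD^[i] (d.orb s c.1).1 := by
  refine pos_iff (g := fun z => 5 / 8 - DD^[i] (d.orb s z).1)
    (gq := fun q => 5 / 8 - DD^[i] (d.orb s q).1) ?_ ?_ z
  · intro q
    push_cast
    rw [DDi_cast, ← orb_cast]
  · intro e z z' h1 h2
    obtain ⟨g1, g2⟩ := d.orb_Nr s h1 h2
    refine ((Nr.zero _).sub (DDi_Nr i g1)).mono ?_
    push_cast; apply le_of_eq; ring

theorem tt_pos (s j : ℕ) (z : ℝ × ℝ) : 0 < (d.orb s z).2 - (2 * j + 3 / 2) ↔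
    ∃ c : (ℚ × ℚ) × ℚ, z ∈ ballOfCode c ∧
      (d.MM s : ℚ) * c.2 < (d.orb s c.1).2 - (2 * j + 3 / 2) := by
  refine pos_iff (g := fun z => (d.orb s z).2 - (2 * j + 3 / 2))
    (gq := fun q => (d.orb s q).2 - (2 * j + 3 / 2)) ?_ ?_ z
  · intro q
    push_cast
    rw [← orb_cast]
  · intro e z z' h1 h2
    obtain ⟨g1, g2⟩ := d.orb_Nr s h1 h2
    exact (g2.sub (Nr.zero _)).mono (by linarith)

variable {d}

theorem no_comp_Cst {z : ℝ × ℝ} (hz : z ∈ d.QQ) {s : ℕ} (hs : d.Cst z s)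
    (hcomp : IsComputablePoint z) : False := by
  have hP := Cst_PP hz hs
  have hball : ∀ (G : ℕ × ((ℚ × ℚ) × ℚ) → Prop), ComputablePred G →
      REPred fun e : ℕ => ∃ c : (ℚ × ℚ) × ℚ, z ∈ ballOfCode c ∧ G (e, c) := by
    intro G hG
    exact re_exists (R := fun p : ℕ × ((ℚ × ℚ) × ℚ) => z ∈ ballOfCode p.2 ∧ G p)
      (re_and (re_comp hcomp Computable.snd) hG.to_re)
  have hi : Computable fun p : ℕ × ((ℚ × ℚ) × ℚ) => 2 * p.1 :=
    n_mul (Computable.const 2) Computable.fst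
  have hzc : Computable fun p : ℕ × ((ℚ × ℚ) × ℚ) => p.2.1 := Computable.fst.comp Computable.snd
  have hrc : Computable fun p : ℕ × ((ℚ × ℚ) × ℚ) => p.2.2 := Computable.snd.comp Computable.snd
  have hL : Computable fun p : ℕ × ((ℚ × ℚ) × ℚ) =>
      ((d.MM s * 4 ^ (2 * p.1) : ℕ) : ℚ) * p.2.2 :=
    q_mul (q_cast (n_mul (Computable.const _) (pow4_c hi))) hrc
  have hD : Computable fun p : ℕ × ((ℚ × ℚ) × ℚ) => DD^[2 * p.1] (d.orb s p.2.1).1 :=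
    DDi_c (Computable.fst.comp (d.orb_c (Computable.const s) hzc)) hi
  have r1 := hball _ (qp_lt hL (q_sub hD (Computable.const (5 / 8))))
  have r2 := hball _ (qp_lt hL (q_sub (Computable.const (5 / 8)) hD))
  have key : ComputablePred fun e : ℕ => lett (d.orb s z).1 (2 * e) = true := by
    rw [ComputablePred.computable_iff_re_compl_re']
    constructor
    · refine r1.of_eq fun e => ?_
      rw [← d.lt_pos s (2 * e) z]
      unfold lett
      rw [decide_eq_true_eq, sub_pos]
    · refine r2.of_eq fun e => ?_
      rw [← d.lt_neg s (2 * e) z]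
      rcases d.PP_cases hP (2 * e) with ⟨_, b, c, _⟩ | ⟨a, _, c, _⟩
      · rw [c]; simp; linarith
      · rw [c]; simp; linarith
  have hca : Computable fun e : ℕ => lett (d.orb s z).1 (2 * e) := by
    obtain ⟨f, hf, h⟩ := ComputablePred.computable_iff.1 key
    refine hf.of_eq fun e => ?_
    have := congrFun h e
    simp only [eq_iff_iff] at this
    exact (Bool.eq_iff_iff.2 this).symm
  exact d.k_diag _ hca fun e s' => d.lett_mem hP e s'

theorem no_comp_apex {z : ℝ × ℝ} (hz : z ∈ d.QQ) (hA : ¬ ∃ s, d.Cst z s)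
    (hcomp : IsComputablePoint z) : False := by
  have key : ∀ j : ℕ, (∀ s, d.f s ≠ j) ↔ ∃ s, j < d.nu s ∧ (∀ r < s, d.f r ≠ j) ∧
      0 < (d.orb s z).2 - (2 * j + 3 / 2) := by
    intro j
    constructor
    · intro h
      obtain ⟨s, hs⟩ := d.ka_tends (j + 1)
      refine ⟨s + 1, ?_, fun r _ => h r, ?_⟩
      · rw [nu_succ]; have := hs s le_rfl; omega
      · have := nCst hz hA (s := s + 1) (c := 2 * j + 2) fun r hr => by
          have := hs r (by omega)
          have : 2 * j + 2 ≤ d.kk r := by unfold kk; omega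
          exact_mod_cast this
        linarith
    · rintro ⟨s, hnu, hlt, ht⟩ r0 hr0
      have hr0s : s ≤ r0 := by
        by_contra hc
        exact hlt r0 (by omega) hr0
      have hne : ∃ v, ∃ r, s ≤ r ∧ d.ka r = v := ⟨_, r0, hr0s, rfl⟩
      classical
      obtain ⟨s1, hs1, hv⟩ := Nat.find_spec hne
      have hmin : ∀ r, s ≤ r → d.ka s1 ≤ d.ka r := fun r hr => by
        rw [hv]; exact Nat.find_min' hne ⟨r, hr, rfl⟩
      have hvj : d.ka s1 ≤ j := by
        have h1 := hmin r0 hr0s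
        have : d.ka r0 ≤ d.f r0 := min_le_left _ _
        omega
      have hnu' : ∀ r, s ≤ r → d.ka s1 + 1 ≤ d.nu r := by
        intro r hr
        rcases Nat.eq_or_lt_of_le hr with rfl | h
        · omega
        · obtain ⟨q, rfl⟩ : ∃ q, r = q + 1 := ⟨r - 1, by omega⟩
          rw [nu_succ]
          have := hmin q (by omega)
          omega
      have hfv : ∀ r, s ≤ r → d.ka r = d.ka s1 → d.f r = d.ka s1 := by
        intro r hr h
        have h2 := hnu' r hr
        have h3 : d.ka r = min (d.f r) (d.nu r) := rfl
        omega
      have hstr : ∀ r, s ≤ r → r ≠ s1 → d.ka s1 + 1 ≤ d.ka r := by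
        intro r hr hne
        by_contra hc
        have h1 := hmin r hr
        have h2 := hfv r hr (by omega)
        have h3 := hfv s1 hs1 rfl
        exact hne (d.f_inj (h2.trans h3.symm))
      have hkk : ∀ r, s ≤ r → r ≠ s1 → (d.kk s1 : ℝ) + 2 ≤ d.kk r := by
        intro r hr hne
        have := hstr r hr hne
        have : d.kk s1 + 2 ≤ d.kk r := by unfold kk; omega
        exact_mod_cast this
      have hbox := QQ_box hz s1 (nCst hz hA fun r hr => hkk r (by omega) (by omega))
      have hkj : (d.kk s1 : ℝ) ≤ 2 * j := by
        have : d.kk s1 ≤ 2 * j := by unfold kk; omega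
        exact_mod_cast this
      have hst := QQ_hi hz hs1 (c := d.kk s1 + 3 / 2)
        (fun r h1 h2 => by linarith [hkk r h1 (by omega)]) (by linarith)
      have hE := (d.par s1).hE
      have h2E : 2 / (d.EE s1 : ℝ) ≤ 1 / 8 := by
        rw [div_le_div_iff₀ (by linarith) (by norm_num)]; linarith
      linarith [hbox.2.2.2]
  apply d.f_re
  have hC : ComputablePred fun p : ℕ × ℕ => p.1 < d.nu p.2 :=
    p_lt Computable.fst (d.nu_c.comp Computable.snd)
  have hF : ComputablePred fun p : ℕ × ℕ => ∀ r < p.2, d.f r ≠ p.1 := by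
    have hb : Computable fun p : ℕ × ℕ =>
        (Nat.rec true (fun y IH => if d.f y = p.1 then false else IH) p.2 : Bool) := by
      refine rec_c (α := ℕ) (F := fun j n =>
        (Nat.rec true (fun y IH => if d.f y = j then false else IH) n : Bool)) (g := fun _ => true)
        (h := fun q => if d.f q.2.1 = q.1 then false else q.2.2) (Computable.const true) ?_
        (fun _ => rfl) (fun _ _ => rfl)
      exact p_ite (p_eq (d.f_comp.comp (Computable.fst.comp Computable.snd)) Computable.fst)
        (Computable.const false) (Computable.snd.comp Computable.snd)
    refine (p_eq hb (Computable.const true)).of_eq ?_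
    rintro ⟨j, n⟩
    simp only
    induction n with
    | zero => simp
    | succ n ih =>
      simp only [Nat.lt_succ_iff_lt_or_eq]
      constructor
      · intro h
        split_ifs at h with h1
        rintro r (hr | rfl)
        · exact ih.1 h r hr
        · exact h1
      · intro h
        rw [if_neg (h n (Or.inr rfl))]
        exact ih.2 fun r hr => h r (Or.inl hr)
  have hT : REPred fun p : ℕ × ℕ => 0 < (d.orb p.2 z).2 - (2 * (p.1 : ℝ) + 3 / 2) := by
    have h1 : REPred fun p : ℕ × ℕ => ∃ c : (ℚ × ℚ) × ℚ, z ∈ ballOfCode c ∧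
        (d.MM p.2 : ℚ) * c.2 < (d.orb p.2 c.1).2 - (2 * (p.1 : ℚ) + 3 / 2) := by
      refine re_exists (R := fun q : (ℕ × ℕ) × ((ℚ × ℚ) × ℚ) => z ∈ ballOfCode q.2 ∧
        (d.MM q.1.2 : ℚ) * q.2.2 < (d.orb q.1.2 q.2.1).2 - (2 * (q.1.1 : ℚ) + 3 / 2)) ?_
      refine re_and (re_comp hcomp Computable.snd) (ComputablePred.to_re ?_)
      have c1 : Computable fun q : (ℕ × ℕ) × ((ℚ × ℚ) × ℚ) => q.1.1 :=
        Computable.fst.comp Computable.fst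
      have c2 : Computable fun q : (ℕ × ℕ) × ((ℚ × ℚ) × ℚ) => q.1.2 :=
        Computable.snd.comp Computable.fst
      have c3 : Computable fun q : (ℕ × ℕ) × ((ℚ × ℚ) × ℚ) => q.2.1 :=
        Computable.fst.comp Computable.snd
      have c4 : Computable fun q : (ℕ × ℕ) × ((ℚ × ℚ) × ℚ) => q.2.2 :=
        Computable.snd.comp Computable.snd
      exact qp_lt (q_mul (q_cast (d.MM_c.comp c2)) c4)
        (q_sub (Computable.snd.comp (d.orb_c c2 c3))
          (q_add (q_mul (Computable.const 2) (q_cast c1)) (Computable.const (3 / 2))))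
    exact h1.of_eq fun p => (d.tt_pos p.2 p.1 z).symm
  have hR := re_exists (α := ℕ) (β := ℕ) (re_and hC.to_re (re_and hF.to_re hT))
  exact hR.of_eq fun j => (key j).symm

end Dat
end CF

end PartH

theorem exists_pi01_cantor_fan_without_computable_points :
    ∃ Q : Set (ℝ × ℝ), Q.Nonempty ∧ IsPi01Closed Q ∧ Nonempty (↥Q ≃ₜ ↥cantorFanSet) ∧
      ∀ x ∈ Q, ¬ IsComputablePoint x := by
  obtain ⟨d⟩ := CF.exists_dat
  refine ⟨d.QQ, CF.Dat.QQ_nonempty, d.QQ_pi, CF.Dat.QQ_homeo, fun x hx hc => ?_⟩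
  by_cases hA : ∃ s, d.Cst x s
  · obtain ⟨s, hs⟩ := hA
    exact CF.Dat.no_comp_Cst hx hs hc
  · exact CF.Dat.no_comp_apex hx hA hc
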